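/- Let g be a classical semisimple restricted Lie algebra over k. Then the variety E(2,g) of two-dimensional elementary abelian subalgebras of g is connected. -/

import Mathlib

noncomputable section

namespace ElemAb

variable (p : ℕ) (k : Type) [Field k]

/-- The algebra of polynomial functions on a `k`-vector space `V`: the subalgebra of
`V → k` generated by the linear functionals. -/
def polyFuns (V : Type) [AddCommGroup V] [Module k V] : Subalgebra k (V → k) :=
  Algebra.adjoin k {f : V → k | ∃ φ : V →ₗ[k] k, f = ⇑φ}

/-- The Zariski topology on a `k`-vector space: the topology generated by the complements of
zero sets of polynomial functions. -/
def zar (V : Type) [AddCommGroup V] [Module k V] : TopologicalSpace V :=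
  TopologicalSpace.generateFrom {U | ∃ f ∈ polyFuns k V, U = {x | f x ≠ 0}}

variable (L : Type) [LieRing L] [LieAlgebra k L]

/-- A restricted Lie algebra structure (`p`-map) on the Lie algebra `L`:  a map
`x ↦ x^[p]` having the formal properties of a `p`-th power map, namely
`(t • x)^[p] = t^p • x^[p]`, additivity on commuting elements (and, in general, additivity up
to a correction term lying in the subalgebra generated by the two elements), and
`ad (x^[p]) = (ad x)^p`. -/
structure pStructure : Type where
  pmap : L → L
  pmap_smul : ∀ (t : k) (x : L), pmap (t • x) = t ^ p • pmap x
  pmap_add_of_comm : ∀ x y : L, ⁅x, y⁆ = 0 → pmap (x + y) = pmap x + pmap y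
  pmap_add_mem : ∀ x y : L, pmap (x + y) - pmap x - pmap y ∈ LieSubalgebra.lieSpan k L {x, y}
  ad_pmap : ∀ x y : L, ⁅pmap x, y⁆ = ((LieAlgebra.ad k L x) ^ p) y

variable {p k L}

/-- The (restricted) nullcone `V(g) = {x | x^[p] = 0}`. -/
def pStructure.null (P : pStructure p k L) : Set L := {x | P.pmap x = 0}

/-- A submodule is an elementary abelian subalgebra if it is abelian (hence a subalgebra) and
the `p`-map vanishes on it. -/
def pStructure.IsElemAbelian (P : pStructure p k L) (e : Submodule k L) : Prop :=
  (∀ x ∈ e, ∀ y ∈ e, ⁅x, y⁆ = (0 : L)) ∧ ∀ x ∈ e, P.pmap x = 0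

/-- `E(r, g)`: the `r`-dimensional elementary abelian subalgebras contained in the carrier
set `g` (take `g = Set.univ` for the whole algebra), as a set of submodules. -/
def pStructure.elemSet (P : pStructure p k L) (g : Set L) (r : ℕ) : Set (Submodule k L) :=
  {e | (e : Set L) ⊆ g ∧ Module.finrank k ↥e = r ∧ P.IsElemAbelian e}

/-- Pairs of linearly independent vectors spanning a member of a given collection `C` of
two-dimensional subspaces. -/
def planePairs (C : Set (Submodule k L)) : Set (L × L) :=
  {z | LinearIndependent k ![z.1, z.2] ∧ Submodule.span k (Set.range ![z.1, z.2]) ∈ C}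

/-- The canonical (quotient) map from spanning pairs to planes. -/
def planeMk (C : Set (Submodule k L)) (z : planePairs C) : ↥C :=
  ⟨Submodule.span k (Set.range ![z.val.1, z.val.2]), z.prop.2⟩

/-- The Zariski topology on a collection of two-dimensional subspaces (e.g. `E(2,g)` or
`Gr₂(g)^{V(g)}`), defined as the quotient topology induced from the Zariski topology on the
variety of spanning pairs. -/
def planeTop (C : Set (Submodule k L)) : TopologicalSpace ↥C :=
  TopologicalSpace.coinduced (planeMk C)
    (TopologicalSpace.induced Subtype.val (zar k (L × L)))

/-- The statement that the projective variety `E(2, g)` is connected (the empty space counts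
as connected). -/
def pStructure.EIsConnected (P : pStructure p k L) (g : Set L) : Prop :=
  @IsPreconnected ↥(P.elemSet g 2) (planeTop (P.elemSet g 2)) Set.univ

/-- `N_i(g) = {x | (ad x)^i = 0}`. -/
def Ncal (i : ℕ) : Set L := {x | (LieAlgebra.ad k L x) ^ i = 0}

/-- The truncated exponential `exp x = ∑_{i<p} (ad x)^i / i!`. -/
def expAd (x : L) : Module.End k L :=
  ∑ i ∈ Finset.range p, (i.factorial : k)⁻¹ • ((LieAlgebra.ad k L x) ^ i)

/-- Automorphisms of the Lie algebra `L` (as linear endomorphisms). -/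
def IsLieAut (f : Module.End k L) : Prop :=
  Function.Bijective f ∧ ∀ x y : L, f ⁅x, y⁆ = ⁅f x, f y⁆

/-- Automorphisms of the restricted Lie algebra `(L, [p])`, i.e. automorphisms commuting with
the `p`-map (the group `Aut_p(g)`). -/
def pStructure.IspAut (P : pStructure p k L) (f : Module.End k L) : Prop :=
  IsLieAut f ∧ ∀ x : L, f (P.pmap x) = P.pmap (f x)

/-- A restricted Lie algebra is admissible if `N₃(g) ⊆ V(g)` and `exp(N₃(g)) ⊆ Aut_p(g)`. -/
def pStructure.IsAdmissible (P : pStructure p k L) : Prop :=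
  Ncal (k := k) 3 ⊆ P.null ∧ ∀ x ∈ Ncal (k := k) (L := L) 3, P.IspAut (expAd (p := p) x)


section Classical

variable (k L) [FiniteDimensional k L]

/-- The root space (eigenspace of the adjoint action) of a subalgebra `H` for the linear
form `α` on `H`. -/
def rootSp (H : LieSubalgebra k L) (α : Module.Dual k ↥H) : Submodule k L where
  carrier := {x | ∀ h : ↥H, ⁅(h : L), x⁆ = α h • x}
  add_mem' := by
    intro a b ha hb h
    rw [lie_add, ha h, hb h, smul_add]
  zero_mem' := by intro h; simp
  smul_mem' := by
    intro c x hx h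
    rw [lie_smul, hx h, smul_comm]

/-- Seligman's axiomatic characterization of the classical (semi-)simple Lie algebras in
characteristic `p ≥ 3`:  trivial center, perfectness, and the existence of an abelian Cartan
subalgebra `H` giving a root space decomposition with one-dimensional root spaces
`g_α` (`α ≠ 0`), with `[g_α, g_{-α}]` one-dimensional and with proper root strings. -/
def IsClassicalLie : Prop :=
  LieAlgebra.center k L = ⊥ ∧
  ⁅(⊤ : LieIdeal k L), (⊤ : LieIdeal k L)⁆ = ⊤ ∧
  ∃ H : LieSubalgebra k L, H.IsCartanSubalgebra ∧ IsLieAbelian ↥H ∧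
    (⨆ α : Module.Dual k ↥H, rootSp k L H α) = ⊤ ∧
    (∀ α : Module.Dual k ↥H, α ≠ 0 → rootSp k L H α ≠ ⊥ →
      Module.finrank k ↥(rootSp k L H α) = 1) ∧
    (∀ α : Module.Dual k ↥H, α ≠ 0 → rootSp k L H α ≠ ⊥ →
      Module.finrank k ↥(Submodule.span k
        {z : L | ∃ x ∈ rootSp k L H α, ∃ y ∈ rootSp k L H (-α), ⁅x, y⁆ = z}) = 1) ∧
    (∀ α : Module.Dual k ↥H, α ≠ 0 → rootSp k L H α ≠ ⊥ →
      ∀ β : Module.Dual k ↥H, rootSp k L H β ≠ ⊥ →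
        ∃ n : ℕ, rootSp k L H (β + n • α) = ⊥)

/-- A Lie algebra is classical semisimple if it is the direct sum of ideals each of which is
a simple Lie algebra of classical type. -/
def IsClassicalSemisimple : Prop :=
  ∃ (ι : Type) (_ : Fintype ι) (I : ι → LieIdeal k L),
    (∀ i, LieAlgebra.IsSimple k ↥(I i) ∧ IsClassicalLie k ↥(I i)) ∧
    iSupIndep I ∧ iSup I = ⊤

end Classical
end ElemAb

namespace ElemAb

section SLTwo

variable {k V : Type} [Field k] [AddCommGroup V] [Module k V]

/-- `q` is the largest exponent with `T ^ q x ≠ 0`. -/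
def IsDepth (T : Module.End k V) (x : V) (q : ℕ) : Prop :=
  (T ^ q) x ≠ 0 ∧ (T ^ (q + 1)) x = 0

theorem pow_apply_eq_zero_of_le {T : Module.End k V} {x : V} {i j : ℕ} (hij : i ≤ j)
    (h : (T ^ i) x = 0) : (T ^ j) x = 0 := by
  obtain ⟨d, rfl⟩ := Nat.exists_eq_add_of_le hij
  rw [add_comm, pow_add, Module.End.mul_apply, h, map_zero]

theorem IsDepth.ne_zero_of_le {T : Module.End k V} {x : V} {q i : ℕ} (h : IsDepth T x q)
    (hi : i ≤ q) : (T ^ i) x ≠ 0 :=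
  fun h0 => h.1 (pow_apply_eq_zero_of_le hi h0)

theorem IsDepth.le_of_ne_zero {T : Module.End k V} {x : V} {q i : ℕ} (h : IsDepth T x q)
    (hi : (T ^ i) x ≠ 0) : i ≤ q := by
  by_contra hlt
  exact hi (pow_apply_eq_zero_of_le (by omega) h.2)

theorem IsDepth.le_of_eq_zero {T : Module.End k V} {x : V} {q i : ℕ} (h : IsDepth T x q)
    (hi : (T ^ (i + 1)) x = 0) : q ≤ i := by
  by_contra hlt
  exact h.1 (pow_apply_eq_zero_of_le (by omega) hi)

theorem exists_isDepth {T : Module.End k V} {x : V} {n : ℕ} (hx : x ≠ 0) (h : (T ^ n) x = 0) :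
    ∃ q, IsDepth T x q := by
  classical
  have hex : ∃ n, (T ^ n) x = 0 := ⟨n, h⟩
  have h0 : Nat.find hex ≠ 0 := by
    intro h0
    have := Nat.find_spec hex
    rw [h0] at this
    exact hx (by simpa using this)
  obtain ⟨q, hq⟩ := Nat.exists_eq_succ_of_ne_zero h0
  refine ⟨q, Nat.find_min hex (by omega), ?_⟩
  have := Nat.find_spec hex
  rwa [hq] at this

variable {E F D : Module.End k V} {a μ c : k} {x : V}

theorem lowering_weight (hF : ∀ v, D (F v) = F (D v) - a • F v) (hx : D x = μ • x) (i : ℕ) :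
    D ((F ^ i) x) = (μ - i * a) • (F ^ i) x := by
  induction i with
  | zero => simp [hx]
  | succ i ih =>
    rw [pow_succ', Module.End.mul_apply, hF, ih, map_smul, ← sub_smul]
    congr 1
    push_cast
    ring

theorem raising_lowering_pow (h2 : (2 : k) ≠ 0) (hEF : ∀ v, E (F v) = F (E v) + D v)
    (hF : ∀ v, D (F v) = F (D v) - a • F v) (hx : D x = μ • x) (hc : F (E x) = c • x) (i : ℕ) :
    E ((F ^ (i + 1)) x) = (c + (i + 1) * μ - a * (i * (i + 1)) / 2) • (F ^ i) x := by
  induction i with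
  | zero => simp [hEF, hc, hx, add_smul]
  | succ i ih =>
    rw [pow_succ', Module.End.mul_apply, hEF, ih, map_smul, lowering_weight hF hx,
      ← Module.End.mul_apply F, ← pow_succ', ← add_smul]
    congr 1
    push_cast
    field_simp
    ring

/-- The `sl₂`-string computation: the weight of `x` and the scalar by which `F E` acts on `x`
are determined by the lengths of the two half-strings through `x`. -/
theorem string_weight (h2 : (2 : k) ≠ 0) (hEF : ∀ v, E (F v) = F (E v) + D v)
    (hE : ∀ v, D (E v) = E (D v) + a • E v) (hF : ∀ v, D (F v) = F (D v) - a • F v)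
    (hx : D x = μ • x) (hc : F (E x) = c • x) {q r : ℕ} (hq : IsDepth E x q)
    (hr : IsDepth F x r) (hqr : (r + q + 1 : k) ≠ 0) :
    2 * μ = a * (r - q) ∧ 2 * c = a * (q * (r + 1)) := by
  have e1 := raising_lowering_pow h2 hEF hF hx hc r
  rw [hr.2, map_zero] at e1
  have e1 := (smul_eq_zero.mp e1.symm).resolve_right hr.1
  have e2 := raising_lowering_pow (E := F) (F := E) (D := -D) (a := a) (μ := -μ) (c := c + μ) h2
    (fun v => by rw [hEF]; simp) (fun v => by simp [hE]; abel) (x := x) (by simp [hx])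
    (by rw [hEF, hc, hx, add_smul]) q
  rw [hq.2, map_zero] at e2
  have e2 := (smul_eq_zero.mp e2.symm).resolve_right hq.1
  field_simp at e1 e2
  have hμ : 2 * μ = a * (r - q) := by
    apply mul_left_cancel₀ hqr
    linear_combination e1 - e2
  refine ⟨hμ, ?_⟩
  linear_combination e2 + q * hμ

end SLTwo

end ElemAb
namespace ElemAb

section Roots

variable {k M : Type} [Field k] [LieRing M] [LieAlgebra k M]

/-- A Cartan subalgebra satisfying the axioms of a classical Lie algebra, in odd
characteristic `p`. -/
structure IsSplitCartan (p : ℕ) (H : LieSubalgebra k M) : Prop where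
  three_le : 3 ≤ p
  center_eq_bot : LieAlgebra.center k M = ⊥
  cartan : H.IsCartanSubalgebra
  abelian : IsLieAbelian ↥H
  iSup_rootSp : (⨆ α : Module.Dual k ↥H, rootSp k M H α) = ⊤
  finrank_rootSp : ∀ α : Module.Dual k ↥H, α ≠ 0 → rootSp k M H α ≠ ⊥ →
    Module.finrank k ↥(rootSp k M H α) = 1
  finrank_bracket : ∀ α : Module.Dual k ↥H, α ≠ 0 → rootSp k M H α ≠ ⊥ →
    Module.finrank k ↥(Submodule.span k
      {z : M | ∃ x ∈ rootSp k M H α, ∃ y ∈ rootSp k M H (-α), ⁅x, y⁆ = z}) = 1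
  string : ∀ α : Module.Dual k ↥H, α ≠ 0 → rootSp k M H α ≠ ⊥ →
    ∀ β : Module.Dual k ↥H, rootSp k M H β ≠ ⊥ → ∃ n : ℕ, rootSp k M H (β + n • α) = ⊥

/-- `α` is a root: a nonzero weight with nonzero root space. -/
def IsRoot (H : LieSubalgebra k M) (α : Module.Dual k ↥H) : Prop :=
  α ≠ 0 ∧ rootSp k M H α ≠ ⊥

/-- A normalized `sl₂`-triple attached to the root `α`. -/
structure IsTriple (H : LieSubalgebra k M) (α : Module.Dual k ↥H) (e f : M) (h : ↥H) : Prop where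
  mem_pos : e ∈ rootSp k M H α
  mem_neg : f ∈ rootSp k M H (-α)
  lie_eq : ⁅e, f⁆ = (h : M)
  apply_eq_two : α h = 2

variable {H : LieSubalgebra k M} {α β δ : Module.Dual k ↥H} {x y e f : M} {h : ↥H}

theorem ne_bot_of_mem (hx : x ∈ rootSp k M H α) (h0 : x ≠ 0) : rootSp k M H α ≠ ⊥ := by
  intro hb
  rw [hb] at hx
  exact h0 (by simpa using hx)

theorem isRoot_of_mem (hα : α ≠ 0) (hx : x ∈ rootSp k M H α) (h0 : x ≠ 0) : IsRoot H α :=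
  ⟨hα, ne_bot_of_mem hx h0⟩

theorem IsRoot.exists_ne_zero (hα : IsRoot H α) : ∃ x ∈ rootSp k M H α, x ≠ 0 :=
  (Submodule.ne_bot_iff _).mp hα.2

theorem lie_mem_rootSp (hx : x ∈ rootSp k M H α) (hy : y ∈ rootSp k M H β) :
    ⁅x, y⁆ ∈ rootSp k M H (β + α) := by
  intro h
  rw [leibniz_lie, hx h, hy h, smul_lie, lie_smul, LinearMap.add_apply, add_smul, add_comm]

theorem ad_pow_mem_rootSp (he : e ∈ rootSp k M H α) (hx : x ∈ rootSp k M H δ) (i : ℕ) :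
    (LieAlgebra.ad k M e ^ i) x ∈ rootSp k M H (δ + i • α) := by
  induction i with
  | zero => simpa using hx
  | succ i ih =>
    rw [pow_succ', Module.End.mul_apply, LieAlgebra.ad_apply, add_smul, one_smul, ← add_assoc]
    exact lie_mem_rootSp he ih

namespace IsSplitCartan

variable {p : ℕ} (S : IsSplitCartan p H)
include S

theorem mem_of_mem_rootSp_zero (hx : x ∈ rootSp k M H 0) : x ∈ H := by
  have := S.cartan.self_normalizing
  rw [← this, LieSubalgebra.mem_normalizer_iff]
  intro y hy
  rw [← lie_skew, hx ⟨y, hy⟩]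
  simp

theorem mem_rootSp_zero (h : ↥H) : (h : M) ∈ rootSp k M H 0 := by
  intro h'
  have := S.abelian
  have := trivial_lie_zero ↥H ↥H h' h
  simpa using congrArg (Subtype.val) this

theorem eq_smul (hα : IsRoot H α) (hx : x ∈ rootSp k M H α) (h0 : x ≠ 0)
    (hy : y ∈ rootSp k M H α) : ∃ t : k, y = t • x := by
  have h1 := S.finrank_rootSp α hα.1 hα.2
  obtain ⟨t, ht⟩ := (finrank_eq_one_iff_of_nonzero' (⟨x, hx⟩ : rootSp k M H α)
    (by simpa using h0)).mp h1 ⟨y, hy⟩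
  exact ⟨t, by simpa using (congrArg Subtype.val ht).symm⟩

theorem induction_rootSp {P : M → Prop} (h_zero : P 0) (h_add : ∀ x y, P x → P y → P (x + y))
    (h_mem : ∀ (α : Module.Dual k ↥H), ∀ x ∈ rootSp k M H α, P x) (x : M) : P x := by
  have hx : x ∈ ⨆ α : Module.Dual k ↥H, rootSp k M H α := by
    rw [S.iSup_rootSp]; trivial
  exact Submodule.iSup_induction _ (motive := P) hx h_mem h_zero h_add

theorem end_eq_zero {T : Module.End k M}
    (hT : ∀ (α : Module.Dual k ↥H), ∀ x ∈ rootSp k M H α, T x = 0) : T = 0 := by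
  ext x
  refine S.induction_rootSp (P := fun x => T x = 0) (map_zero T) ?_ hT x
  intro x y hx hy
  rw [map_add, hx, hy, add_zero]

theorem exists_lie_ne_zero (hα : IsRoot H α) :
    ∃ x ∈ rootSp k M H α, ∃ y ∈ rootSp k M H (-α), ⁅x, y⁆ ≠ 0 := by
  by_contra! hc
  have h1 := S.finrank_bracket α hα.1 hα.2
  have : Submodule.span k
      {z : M | ∃ x ∈ rootSp k M H α, ∃ y ∈ rootSp k M H (-α), ⁅x, y⁆ = z} = ⊥ := by
    rw [Submodule.span_eq_bot]
    rintro z ⟨x, hx, y, hy, rfl⟩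
    exact hc x hx y hy
  rw [this] at h1
  simp at h1

theorem neg (hα : IsRoot H α) : IsRoot H (-α) := by
  obtain ⟨x, -, y, hy, hxy⟩ := S.exists_lie_ne_zero hα
  refine isRoot_of_mem (neg_ne_zero.mpr hα.1) hy ?_
  rintro rfl
  simp at hxy

variable [hpf : Fact p.Prime] [CharP k p]

omit S hpf in
theorem mod_smul (δ α : Module.Dual k ↥H) (n : ℕ) : δ + (n % p) • α = δ + n • α := by
  have hp0 : p • α = 0 := by
    ext h
    simp
  conv_rhs => rw [← Nat.mod_add_div n p, add_smul, mul_comm, mul_smul, hp0, smul_zero, add_zero]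

theorem exists_rootSp_eq_bot (hα : IsRoot H α)
    (δ : Module.Dual k ↥H) :
    ∃ n < p, rootSp k M H (δ + n • α) = ⊥ := by
  by_cases hδ : rootSp k M H δ = ⊥
  · exact ⟨0, hpf.out.pos, by simpa using hδ⟩
  · obtain ⟨n, hn⟩ := S.string α hα.1 hα.2 δ hδ
    exact ⟨n % p, Nat.mod_lt _ hpf.out.pos, by rwa [mod_smul (p := p)]⟩

theorem string_length_lt (hα : IsRoot H α) (he : e ∈ rootSp k M H α)
    (hf : f ∈ rootSp k M H (-α)) (hx : x ∈ rootSp k M H δ) {q r : ℕ}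
    (hq : (LieAlgebra.ad k M e ^ q) x ≠ 0) (hr : (LieAlgebra.ad k M f ^ r) x ≠ 0) :
    r + q + 1 < p := by
  by_contra! hlt
  obtain ⟨n, hn, hb⟩ := S.exists_rootSp_eq_bot hα (δ - r • α)
  rcases le_or_gt n r with hnr | hnr
  · obtain ⟨d, rfl⟩ := Nat.exists_eq_add_of_le hnr
    refine ne_bot_of_mem (ad_pow_mem_rootSp hf hx d)
      (fun h0 => hr (pow_apply_eq_zero_of_le (Nat.le_add_left d n) h0)) ?_
    rw [← hb]
    congr 1
    module
  · obtain ⟨d, rfl⟩ := Nat.exists_eq_add_of_le hnr.le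
    refine ne_bot_of_mem (ad_pow_mem_rootSp he hx d)
      (fun h0 => hq (pow_apply_eq_zero_of_le (by omega) h0)) ?_
    rw [← hb]
    congr 1
    module

theorem ad_pow_eq_zero (hα : IsRoot H α)
    (he : e ∈ rootSp k M H α) : LieAlgebra.ad k M e ^ (p - 1) = 0 := by
  have := hpf.out.two_le
  refine S.end_eq_zero fun δ x hx => ?_
  by_contra hne
  have h0 : x ≠ 0 := by rintro rfl; simp at hne
  have := S.string_length_lt hα he (Submodule.zero_mem _) hx hne (r := 0) (by simpa)
  omega

omit hpf in
theorem two_ne_zero : (2 : k) ≠ 0 := by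
  have h3 := S.three_le
  have : ((2 : ℕ) : k) ≠ 0 := by
    rw [Ne, CharP.cast_eq_zero_iff k p]
    exact Nat.not_dvd_of_pos_of_lt (by omega) (by omega)
  exact_mod_cast this

theorem five_le (hα : IsRoot H α) : 5 ≤ p := by
  have h3 := S.three_le
  have hpr := hpf.out
  have h4 : p ≠ 4 := by
    rintro rfl
    norm_num at hpr
  by_contra! hlt
  obtain rfl : p = 3 := by omega
  obtain ⟨x, hx, y, hy, hxy⟩ := S.exists_lie_ne_zero hα
  have hxy' := lie_mem_rootSp hx hy
  rw [neg_add_cancel] at hxy'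
  obtain ⟨n, hn, hb⟩ := S.exists_rootSp_eq_bot hα 0
  have hm := mod_smul (p := 3) (-α) α 3
  rw [Nat.mod_self, zero_smul, add_zero] at hm
  interval_cases n
  · exact ne_bot_of_mem hxy' hxy (by simpa using hb)
  · exact hα.2 (by simpa using hb)
  · refine (S.neg hα).2 ?_
    rw [hm, ← hb]
    congr 1
    module

end IsSplitCartan
end Roots
end ElemAb
namespace ElemAb

section Triples

variable {k M : Type} [Field k] [LieRing M] [LieAlgebra k M]
variable {H : LieSubalgebra k M} {α β δ : Module.Dual k ↥H} {x y e f e' f' : M} {h h' : ↥H}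

theorem natCast_ne_zero_of_lt (p : ℕ) [CharP k p] {n : ℕ} (h0 : 0 < n) (hn : n < p) :
    (n : k) ≠ 0 := by
  rw [Ne, CharP.cast_eq_zero_iff k p]
  exact Nat.not_dvd_of_pos_of_lt h0 hn

theorem natCast_inj_of_lt (p : ℕ) [CharP k p] {m n : ℕ} (hm : m < p) (hn : n < p)
    (h : (m : k) = n) : m = n :=
  (CharP.natCast_injOn_Iio k p) hm hn h

theorem intCast_inj_of_abs_lt (p : ℕ) [CharP k p] {m n : ℤ} (hmn : |m - n| < p)
    (h : (m : k) = n) : m = n := by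
  have : ((m - n : ℤ) : k) = 0 := by push_cast; rw [h, sub_self]
  rw [CharP.intCast_eq_zero_iff k p] at this
  have := Int.eq_zero_of_abs_lt_dvd this hmn
  omega

namespace IsTriple

theorem symm (t : IsTriple H α e f h) : IsTriple H (-α) f e (-h) where
  mem_pos := t.mem_neg
  mem_neg := by rw [neg_neg]; exact t.mem_pos
  lie_eq := by rw [← lie_skew, t.lie_eq]; simp
  apply_eq_two := by simp [t.apply_eq_two]

theorem lie_e (t : IsTriple H α e f h) : ⁅(h : M), e⁆ = (2 : k) • e := by
  rw [t.mem_pos h, t.apply_eq_two]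

theorem lie_f (t : IsTriple H α e f h) : ⁅(h : M), f⁆ = -((2 : k) • f) := by
  rw [t.mem_neg h, LinearMap.neg_apply, t.apply_eq_two, neg_smul]

end IsTriple

namespace IsSplitCartan

variable {p : ℕ} [hpf : Fact p.Prime] [CharP k p] (S : IsSplitCartan p H)
include S

theorem string_weight_aux (hα : IsRoot H α) (he : e ∈ rootSp k M H α)
    (hf : f ∈ rootSp k M H (-α)) (hh : ⁅e, f⁆ = (h : M)) (hδ : IsRoot H δ)
    (hx : x ∈ rootSp k M H δ) (h0 : x ≠ 0) {q r : ℕ} (hq : IsDepth (LieAlgebra.ad k M e) x q)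
    (hr : IsDepth (LieAlgebra.ad k M f) x r) :
    2 * δ h = α h * (r - q) ∧
      ∃ c : k, ⁅f, ⁅e, x⁆⁆ = c • x ∧ 2 * c = α h * (q * (r + 1)) := by
  have hlt := S.string_length_lt hα he hf hx hq.1 hr.1
  obtain ⟨c, hc⟩ : ∃ c : k, ⁅f, ⁅e, x⁆⁆ = c • x := by
    refine S.eq_smul hδ hx h0 ?_
    have := lie_mem_rootSp hf (lie_mem_rootSp he hx)
    rwa [add_assoc, add_neg_cancel, add_zero] at this
  have hne : (r + q + 1 : k) ≠ 0 := by
    exact_mod_cast natCast_ne_zero_of_lt (k := k) p (Nat.succ_pos (r + q)) hlt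
  obtain ⟨w1, w2⟩ := string_weight (E := LieAlgebra.ad k M e) (F := LieAlgebra.ad k M f)
    (D := LieAlgebra.ad k M (h : M)) (a := α h) (μ := δ h) (c := c) S.two_ne_zero
    (fun v => by
      simp only [LieAlgebra.ad_apply]
      rw [leibniz_lie, hh, add_comm])
    (fun v => by
      simp only [LieAlgebra.ad_apply]
      rw [leibniz_lie, he h, smul_lie, add_comm])
    (fun v => by
      simp only [LieAlgebra.ad_apply]
      rw [leibniz_lie, hf h, smul_lie, LinearMap.neg_apply, neg_smul]
      abel)
    (hx h) hc hq hr hne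
  exact ⟨w1, c, hc, w2⟩

theorem exists_depth (hα : IsRoot H α)
    (he : e ∈ rootSp k M H α) (h0 : x ≠ 0) :
    ∃ q, IsDepth (LieAlgebra.ad k M e) x q :=
  exists_isDepth h0 (n := p - 1) (by rw [S.ad_pow_eq_zero hα he, LinearMap.zero_apply])

theorem exists_triple (hα : IsRoot H α) : ∃ e f h, IsTriple H α e f h := by
  obtain ⟨e, he, f, hf, hef⟩ := S.exists_lie_ne_zero hα
  have hH : ⁅e, f⁆ ∈ H := by
    refine S.mem_of_mem_rootSp_zero ?_
    have := lie_mem_rootSp he hf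
    rwa [neg_add_cancel] at this
  obtain ⟨h, hh⟩ : ∃ h : ↥H, ⁅e, f⁆ = (h : M) := ⟨⟨_, hH⟩, rfl⟩
  have ha : α h ≠ 0 := by
    intro ha
    have hz : LieAlgebra.ad k M (h : M) = 0 := by
      refine S.end_eq_zero fun δ x hx => ?_
      rw [LieAlgebra.ad_apply, hx h]
      by_cases hδ : δ = 0
      · simp [hδ]
      by_cases h0 : x = 0
      · simp [h0]
      obtain ⟨q, hq⟩ := S.exists_depth hα he h0
      obtain ⟨r, hr⟩ := S.exists_depth (S.neg hα) hf h0
      have := (S.string_weight_aux  hα he hf hh (isRoot_of_mem hδ hx h0) hx h0 hq hr).1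
      rw [ha, zero_mul] at this
      rw [(mul_eq_zero.mp this).resolve_left S.two_ne_zero, zero_smul]
    have hc : (h : M) ∈ LieAlgebra.center k M := by
      rw [LieModule.mem_maxTrivSubmodule]
      intro m
      rw [← lie_skew, ← LieAlgebra.ad_apply k, hz, LinearMap.zero_apply, neg_zero]
    rw [S.center_eq_bot, LieSubmodule.mem_bot] at hc
    exact hef (hh.trans hc)
  refine ⟨e, (2 / α h) • f, (2 / α h) • h, he, Submodule.smul_mem _ _ hf, ?_, ?_⟩
  · rw [lie_smul, hh]; rfl
  · rw [map_smul, smul_eq_mul]; field_simp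

variable (t : IsTriple H α e f h)
include t

omit hpf in
theorem triple_ne_zero : (h : M) ≠ 0 ∧ e ≠ 0 ∧ f ≠ 0 := by
  have hh : h ≠ 0 := by
    rintro rfl
    exact S.two_ne_zero (by simpa using t.apply_eq_two.symm)
  have hh' : (h : M) ≠ 0 := by simpa using hh
  refine ⟨hh', ?_, ?_⟩
  · rintro rfl
    exact hh' (by simpa using t.lie_eq.symm)
  · rintro rfl
    exact hh' (by simpa using t.lie_eq.symm)

end IsSplitCartan
end Triples
end ElemAb
namespace ElemAb

section Strings

variable {k M : Type} [Field k] [LieRing M] [LieAlgebra k M]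
variable {H : LieSubalgebra k M} {α β δ : Module.Dual k ↥H} {x y e f e' f' : M} {h h' : ↥H}

theorem isDepth_zero_iff {T : Module.End k M} : IsDepth T x 0 ↔ x ≠ 0 ∧ T x = 0 := by
  simp [IsDepth]

namespace IsSplitCartan

variable {p : ℕ} [hpf : Fact p.Prime] [CharP k p] (S : IsSplitCartan p H)
include S

omit hpf in
theorem isRoot_of_triple (t : IsTriple H α e f h) : IsRoot H α := by
  refine isRoot_of_mem ?_ t.mem_pos (S.triple_ne_zero t).2.1
  rintro rfl
  exact S.two_ne_zero (by simpa using t.apply_eq_two.symm)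

theorem weight (t : IsTriple H α e f h) (hδ : IsRoot H δ) (hx : x ∈ rootSp k M H δ)
    (h0 : x ≠ 0) {q r : ℕ} (hq : IsDepth (LieAlgebra.ad k M e) x q)
    (hr : IsDepth (LieAlgebra.ad k M f) x r) :
    δ h = r - q ∧ ⁅f, ⁅e, x⁆⁆ = ((q : k) * (r + 1)) • x := by
  obtain ⟨w, c, hc, w2⟩ := S.string_weight_aux (S.isRoot_of_triple t) t.mem_pos t.mem_neg
    t.lie_eq hδ hx h0 hq hr
  rw [t.apply_eq_two] at w w2
  refine ⟨mul_left_cancel₀ S.two_ne_zero w, ?_⟩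
  rw [hc, mul_left_cancel₀ S.two_ne_zero w2]

theorem depth_add_lt (t : IsTriple H α e f h) (hx : x ∈ rootSp k M H δ) {q r : ℕ}
    (hq : IsDepth (LieAlgebra.ad k M e) x q) (hr : IsDepth (LieAlgebra.ad k M f) x r) :
    r + q + 1 < p :=
  S.string_length_lt (S.isRoot_of_triple t) t.mem_pos t.mem_neg hx hq.1 hr.1

theorem exists_depth_pos (t : IsTriple H α e f h) (h0 : x ≠ 0) :
    ∃ q, IsDepth (LieAlgebra.ad k M e) x q :=
  S.exists_depth (S.isRoot_of_triple t) t.mem_pos h0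

theorem exists_depth_neg (t : IsTriple H α e f h) (h0 : x ≠ 0) :
    ∃ q, IsDepth (LieAlgebra.ad k M f) x q :=
  S.exists_depth_pos t.symm h0

theorem lie_lie_ne_zero (t : IsTriple H α e f h) (hδ : IsRoot H δ)
    (hx : x ∈ rootSp k M H δ) (hne : ⁅e, x⁆ ≠ 0) : ⁅f, ⁅e, x⁆⁆ ≠ 0 := by
  have h0 : x ≠ 0 := by rintro rfl; simp at hne
  obtain ⟨q, hq⟩ := S.exists_depth_pos t h0
  obtain ⟨r, hr⟩ := S.exists_depth_neg t h0
  have hlt := S.depth_add_lt t hx hq hr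
  have hq1 : 1 ≤ q := hq.le_of_ne_zero (by simpa using hne)
  rw [(S.weight t hδ hx h0 hq hr).2]
  refine smul_ne_zero (mul_ne_zero (natCast_ne_zero_of_lt p hq1 (by omega)) ?_) h0
  exact_mod_cast natCast_ne_zero_of_lt (k := k) p (Nat.succ_pos r) (by omega)

theorem not_isRoot_two_smul (hα : IsRoot H α) : ¬ IsRoot H (2 • α) := by
  intro h2
  obtain ⟨e, f, h, t⟩ := S.exists_triple hα
  obtain ⟨hh0, he0, hf0⟩ := S.triple_ne_zero t
  obtain ⟨x, hx, h0⟩ := h2.exists_ne_zero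
  have hp5 := S.five_le hα
  obtain ⟨q, hq⟩ := S.exists_depth_pos t h0
  obtain ⟨r, hr⟩ := S.exists_depth_neg t h0
  have hlt := S.depth_add_lt t hx hq hr
  obtain ⟨w1, w2⟩ := S.weight t h2 hx h0 hq hr
  have hfx : ⁅f, x⁆ ∈ rootSp k M H α := by
    have := lie_mem_rootSp t.mem_neg hx
    rwa [show 2 • α + -α = α by module] at this
  obtain ⟨c, hc⟩ := S.eq_smul hα t.mem_pos he0 hfx
  have hef : ⁅e, ⁅f, x⁆⁆ = 0 := by rw [hc, lie_smul, lie_self, smul_zero]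
  rw [leibniz_lie, t.lie_eq, hx h, w2, ← add_smul] at hef
  have h4 : (2 • α) h = 4 := by
    simp [t.apply_eq_two]; norm_num
  have hz := (smul_eq_zero.mp hef).resolve_right h0
  rw [h4] at w1 hz
  have hrq : (r : k) = q + 4 := by rw [w1]; ring
  rw [hrq] at hz
  have hz' : ((q + 1 : ℕ) : k) * ((q + 4 : ℕ) : k) = 0 := by
    push_cast; rw [← hz]; ring
  have hq4 : ((q + 4 : ℕ) : k) = 0 :=
    (mul_eq_zero.mp hz').resolve_left (natCast_ne_zero_of_lt p (by omega) (by omega))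
  have hqp : q + 4 = p := by
    rw [CharP.cast_eq_zero_iff k p] at hq4
    obtain ⟨m, hm⟩ := hq4
    rcases m with _ | _ | m
    · omega
    · omega
    · nlinarith
  obtain ⟨n, hn, hb⟩ := S.exists_rootSp_eq_bot hα 0
  have hm := mod_smul (p := p) 0 α p
  rw [Nat.mod_self, zero_smul, add_zero, zero_add] at hm
  have hcases : n = 0 ∨ n = 1 ∨ n = q + 3 ∨ ∃ i ≤ q, n = 2 + i := by
    by_cases h0 : n = 0
    · exact Or.inl h0
    by_cases h1 : n = 1
    · exact Or.inr (Or.inl h1)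
    by_cases h2 : n = q + 3
    · exact Or.inr (Or.inr (Or.inl h2))
    exact Or.inr (Or.inr (Or.inr ⟨n - 2, by omega, by omega⟩))
  rcases hcases with rfl | rfl | rfl | ⟨i, hi, rfl⟩
  · exact ne_bot_of_mem (S.mem_rootSp_zero h) hh0 (by simpa using hb)
  · exact hα.2 (by simpa using hb)
  · refine (S.neg hα).2 ?_
    rw [← hb]
    congr 1
    rw [zero_add, neg_eq_iff_add_eq_zero, hm, ← hqp]
    module
  · refine ne_bot_of_mem (ad_pow_mem_rootSp t.mem_pos hx i) (hq.ne_zero_of_le hi) ?_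
    rw [← hb]
    congr 1
    module

theorem not_isRoot_three_smul (hα : IsRoot H α) : ¬ IsRoot H (3 • α) := by
  intro h3
  obtain ⟨e, f, h, t⟩ := S.exists_triple hα
  obtain ⟨x, hx, h0⟩ := h3.exists_ne_zero
  have hp5 := S.five_le hα
  obtain ⟨q, hq⟩ := S.exists_depth_pos t h0
  have hfx : ⁅f, x⁆ = 0 := by
    have := lie_mem_rootSp t.mem_neg hx
    rw [show 3 • α + -α = 2 • α by module] at this
    by_contra hne
    refine S.not_isRoot_two_smul hα (isRoot_of_mem ?_ this hne)
    intro h2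
    have := congrArg (fun φ => φ h) h2
    simp only [LinearMap.smul_apply, t.apply_eq_two, LinearMap.zero_apply, nsmul_eq_mul,
      mul_eq_zero] at this
    exact S.two_ne_zero (by simpa using this)
  have hr : IsDepth (LieAlgebra.ad k M f) x 0 := isDepth_zero_iff.mpr ⟨h0, hfx⟩
  have hlt := S.depth_add_lt t hx hq hr
  have w1 := (S.weight t h3 hx h0 hq hr).1
  have h6 : ((q + 6 : ℕ) : k) = 0 := by
    have : (3 • α) h = 6 := by simp [t.apply_eq_two]; norm_num
    rw [this] at w1
    push_cast
    rw [w1]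
    push_cast
    ring
  have hqp : q + 6 = p := by
    rw [CharP.cast_eq_zero_iff k p] at h6
    obtain ⟨m, hm⟩ := h6
    rcases m with _ | _ | m
    · omega
    · omega
    · nlinarith
  obtain ⟨m, hm⟩ := hpf.out.odd_of_ne_two (by omega)
  have hj : IsRoot H ((m + 1) • α) := by
    have hmem := ad_pow_mem_rootSp t.mem_pos hx (m - 2)
    rw [← add_smul, show 3 + (m - 2) = m + 1 by omega] at hmem
    refine isRoot_of_mem ?_ hmem (hq.ne_zero_of_le (by omega))
    intro hz
    have := congrArg (fun φ => φ h) hz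
    simp only [LinearMap.smul_apply, t.apply_eq_two, LinearMap.zero_apply, nsmul_eq_mul,
      mul_eq_zero] at this
    exact natCast_ne_zero_of_lt (k := k) p (Nat.succ_pos m) (by omega)
      (this.resolve_right S.two_ne_zero)
  refine S.not_isRoot_two_smul hj ?_
  have : 2 • (m + 1) • α = α := by
    have hm' := mod_smul (p := p) 0 α p
    rw [Nat.mod_self, zero_smul, add_zero, zero_add] at hm'
    rw [smul_smul, show 2 * (m + 1) = p + 1 by omega, add_smul, ← hm', zero_add, one_smul]
  rwa [this]

theorem top (t : IsTriple H α e f h) (hδ : IsRoot H δ) (hx : x ∈ rootSp k M H δ)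
    (h0 : x ≠ 0) {q r : ℕ} (hq : IsDepth (LieAlgebra.ad k M e) x q)
    (hr : IsDepth (LieAlgebra.ad k M f) x r) :
    IsRoot H (δ + q • α) ∧ IsDepth (LieAlgebra.ad k M e) ((LieAlgebra.ad k M e ^ q) x) 0 ∧
      IsDepth (LieAlgebra.ad k M f) ((LieAlgebra.ad k M e ^ q) x) (r + q) ∧
      (δ + q • α) h = ((r + q : ℕ) : k) := by
  have hα := S.isRoot_of_triple t
  obtain ⟨hh0, he0, hf0⟩ := S.triple_ne_zero t
  have hmem := ad_pow_mem_rootSp t.mem_pos hx q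
  have hkill : ⁅e, (LieAlgebra.ad k M e ^ q) x⁆ = 0 := by
    rw [← LieAlgebra.ad_apply k, ← Module.End.mul_apply, ← pow_succ']
    exact hq.2
  have hroot : IsRoot H (δ + q • α) := by
    refine isRoot_of_mem ?_ hmem hq.1
    intro hz
    rcases q with _ | q
    · exact hδ.1 (by simpa using hz)
    have hm1 := ad_pow_mem_rootSp t.mem_pos hx q
    have hneg : δ + q • α = -α := by
      rw [eq_neg_iff_add_eq_zero, ← hz]
      module
    rw [hneg] at hm1
    obtain ⟨c, hc⟩ := S.eq_smul (S.neg hα) t.mem_neg hf0 hm1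
    have hne := hq.1
    rw [pow_succ', Module.End.mul_apply, hc, LieAlgebra.ad_apply] at hkill hne
    rw [lie_smul, t.lie_eq] at hkill hne
    rw [lie_smul, ← lie_skew, t.lie_e, smul_neg, neg_eq_zero, smul_smul, smul_eq_zero,
      mul_eq_zero] at hkill
    have : c = 0 := (hkill.resolve_right he0).resolve_right S.two_ne_zero
    exact hne (by rw [this, zero_smul])
  have hd0 : IsDepth (LieAlgebra.ad k M e) ((LieAlgebra.ad k M e ^ q) x) 0 :=
    isDepth_zero_iff.mpr ⟨hq.1, hkill⟩
  obtain ⟨r', hr'⟩ := S.exists_depth_neg t hq.1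
  have hw := (S.weight t hδ hx h0 hq hr).1
  have hw' := (S.weight t hroot hmem hq.1 hd0 hr').1
  have hlt := S.depth_add_lt t hx hq hr
  have hlt' := S.depth_add_lt t hmem hd0 hr'
  have hval : (δ + q • α) h = ((r + q : ℕ) : k) := by
    simp only [LinearMap.add_apply, LinearMap.smul_apply, t.apply_eq_two, hw, nsmul_eq_mul]
    push_cast
    ring
  have : r' = r + q := by
    refine natCast_inj_of_lt (k := k) p (by omega) (by omega) ?_
    rw [← hval, hw']
    simp
  exact ⟨hroot, hd0, this ▸ hr', hval⟩

omit hpf [CharP k p] in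
theorem lie_lie_eq_zero_of_mem_zero (he : e ∈ rootSp k M H α) (hx : x ∈ rootSp k M H 0) :
    ⁅e, ⁅e, x⁆⁆ = 0 := by
  have := he ⟨x, S.mem_of_mem_rootSp_zero hx⟩
  rw [← lie_skew e x, lie_neg]
  simp only at this
  rw [this, lie_smul, lie_self, smul_zero, neg_zero]

theorem ad_neg_pow_eq_zero (t : IsTriple H α e f h) {N : ℕ}
    (hN : LieAlgebra.ad k M e ^ (N + 1) = 0) : LieAlgebra.ad k M f ^ (N + 1) = 0 := by
  obtain ⟨hh0, he0, hf0⟩ := S.triple_ne_zero t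
  refine S.end_eq_zero fun δ x hx => ?_
  by_contra hne
  have h0 : x ≠ 0 := by rintro rfl; simp at hne
  by_cases hδ : δ = 0
  · subst hδ
    have hN0 : N ≠ 0 := by
      rintro rfl
      have := LinearMap.congr_fun hN f
      simp only [zero_add, pow_one, LieAlgebra.ad_apply, t.lie_eq, LinearMap.zero_apply] at this
      exact hh0 this
    refine hne (pow_apply_eq_zero_of_le (i := 2) (by omega) ?_)
    rw [pow_two]
    exact S.lie_lie_eq_zero_of_mem_zero t.mem_neg hx
  · obtain ⟨q, hq⟩ := S.exists_depth_pos t h0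
    obtain ⟨r, hr⟩ := S.exists_depth_neg t h0
    have hr' := hr.le_of_ne_zero hne
    have := (S.top t.symm (isRoot_of_mem hδ hx h0) hx h0 hr hq).2.2.1
    refine this.ne_zero_of_le (i := N + 1) (by omega) ?_
    rw [hN, LinearMap.zero_apply]

theorem lie_ne_zero_of_isRoot_add (t : IsTriple H α e f h) (hβ : IsRoot H β)
    (hαβ : IsRoot H (β + α)) (hy : y ∈ rootSp k M H β) (h0 : y ≠ 0) : ⁅e, y⁆ ≠ 0 := by
  intro hz
  have hα := S.isRoot_of_triple t
  have hq : IsDepth (LieAlgebra.ad k M e) y 0 := isDepth_zero_iff.mpr ⟨h0, hz⟩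
  obtain ⟨r, hr⟩ := S.exists_depth_neg t h0
  have hw := (S.weight t hβ hy h0 hq hr).1
  obtain ⟨u, hu, hu0⟩ := hαβ.exists_ne_zero
  have hfu : ⁅f, u⁆ ∈ rootSp k M H β := by
    have := lie_mem_rootSp t.mem_neg hu
    rwa [add_neg_cancel_right] at this
  obtain ⟨c, hc⟩ := S.eq_smul hβ hy h0 hfu
  have hfu0 : ⁅f, u⁆ = 0 := by
    by_contra hne
    exact S.lie_lie_ne_zero t.symm hαβ hu hne (by rw [hc, lie_smul, hz, smul_zero])
  have hr' : IsDepth (LieAlgebra.ad k M f) u 0 := isDepth_zero_iff.mpr ⟨hu0, hfu0⟩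
  obtain ⟨q', hq'⟩ := S.exists_depth_pos t hu0
  have hw' := (S.weight t hαβ hu hu0 hq' hr').1
  have hlt := S.depth_add_lt t hy hq hr
  have hlt' := S.depth_add_lt t hu hq' hr'
  have hsum : ((r + q' + 2 : ℕ) : k) = 0 := by
    rw [LinearMap.add_apply, t.apply_eq_two, hw] at hw'
    push_cast at hw' ⊢
    linear_combination hw'
  have hp : r + q' + 2 = p := by
    rw [CharP.cast_eq_zero_iff k p] at hsum
    obtain ⟨m, hm⟩ := hsum
    rcases m with _ | _ | m
    · omega
    · omega
    · nlinarith
  obtain ⟨n, hn, hb⟩ := S.exists_rootSp_eq_bot hα (β - r • α)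
  rcases le_or_gt n r with hnr | hnr
  · obtain ⟨d, rfl⟩ := Nat.exists_eq_add_of_le hnr
    refine ne_bot_of_mem (ad_pow_mem_rootSp t.mem_neg hy d)
      (hr.ne_zero_of_le (Nat.le_add_left d n)) ?_
    rw [← hb]
    congr 1
    module
  · obtain ⟨d, rfl⟩ := Nat.exists_eq_add_of_lt hnr
    refine ne_bot_of_mem (ad_pow_mem_rootSp t.mem_pos hu d) (hq'.ne_zero_of_le (by omega)) ?_
    rw [← hb]
    congr 1
    module

theorem lie_neg_eq_zero (t : IsTriple H α e f h) (t' : IsTriple H β e' f' h')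
    (hc : ⁅e, e'⁆ = 0) : ⁅f, f'⁆ = 0 := by
  have hα := S.isRoot_of_triple t
  have hβ := S.isRoot_of_triple t'
  by_contra hne
  have hmem := lie_mem_rootSp t.mem_neg t'.mem_neg
  by_cases hz : β + α = 0
  · obtain rfl : β = -α := eq_neg_of_add_eq_zero_left hz
    obtain ⟨c, hc'⟩ := S.eq_smul (S.neg hα) t.mem_neg (S.triple_ne_zero t).2.2 t'.mem_pos
    rw [hc', lie_smul, t.lie_eq] at hc
    rcases smul_eq_zero.mp hc with rfl | h0
    · exact (S.triple_ne_zero t').2.1 (by simpa using hc')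
    · exact (S.triple_ne_zero t).1 h0
  · have hroot : IsRoot H (β + α) := by
      rw [← neg_add] at hmem
      have := S.neg (isRoot_of_mem (neg_ne_zero.mpr hz) hmem hne)
      rwa [neg_neg] at this
    exact S.lie_ne_zero_of_isRoot_add t hβ hroot t'.mem_pos (S.triple_ne_zero t').2.1 hc

end IsSplitCartan
end Strings
end ElemAb
namespace ElemAb

section Chains

variable {k M : Type} [Field k] [LieRing M] [LieAlgebra k M]
variable {H : LieSubalgebra k M} {α β δ : Module.Dual k ↥H} {x y e f e' f' : M} {h h' : ↥H}

theorem ad_pow_lie_of_commute (hc : ⁅e, e'⁆ = 0) (i : ℕ) (x : M) :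
    (LieAlgebra.ad k M e ^ i) ⁅e', x⁆ = ⁅e', (LieAlgebra.ad k M e ^ i) x⁆ := by
  induction i generalizing x with
  | zero => simp
  | succ i ih =>
    rw [pow_succ, Module.End.mul_apply, Module.End.mul_apply, ← ih, LieAlgebra.ad_apply,
      LieAlgebra.ad_apply, leibniz_lie, hc, zero_lie, zero_add]

namespace IsSplitCartan

variable {p : ℕ} [hpf : Fact p.Prime] [CharP k p] (S : IsSplitCartan p H)
include S

theorem chain_step (t : IsTriple H α e f h) (t' : IsTriple H β e' f' h') {N w : ℕ}
    (hE : LieAlgebra.ad k M e ^ (N + 1) = 0) (hc : ⁅e, e'⁆ = 0) (hw : β h = (w : k))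
    (hwp : w < p) (hNp : 2 * N < w + p) (hδ : IsRoot H δ) (hδβ : IsRoot H (δ + β))
    (hx : x ∈ rootSp k M H δ) (hne : ⁅e', x⁆ ≠ 0) {q r q' r' : ℕ}
    (hq : IsDepth (LieAlgebra.ad k M e) x q) (hr : IsDepth (LieAlgebra.ad k M f) x r)
    (hq' : IsDepth (LieAlgebra.ad k M e) ⁅e', x⁆ q')
    (hr' : IsDepth (LieAlgebra.ad k M f) ⁅e', x⁆ r') :
    (r' : ℤ) - q' = r - q + w := by
  have hF := S.ad_neg_pow_eq_zero t hE
  have h0 : x ≠ 0 := by rintro rfl; simp at hne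
  have hmem := lie_mem_rootSp t'.mem_pos hx
  have hqN : q ≤ N := hq.le_of_eq_zero (by rw [hE, LinearMap.zero_apply])
  have hrN' : r' ≤ N := hr'.le_of_eq_zero (by rw [hF, LinearMap.zero_apply])
  have hqq : q' ≤ q := hq'.le_of_eq_zero (by
    rw [ad_pow_lie_of_commute hc, hq.2, lie_zero])
  have hrr : r ≤ r' := by
    refine hr'.le_of_ne_zero fun hz => ?_
    have hback : ⁅f', ⁅e', x⁆⁆ ∈ rootSp k M H δ := by
      have := lie_mem_rootSp t'.mem_neg hmem
      rwa [add_neg_cancel_right] at this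
    obtain ⟨c, hcx⟩ := S.eq_smul hδ hx h0 hback
    have hc0 : c ≠ 0 := by
      rintro rfl
      exact S.lie_lie_ne_zero t' hδ hx hne (by rw [hcx, zero_smul])
    have h1 := ad_pow_lie_of_commute (k := k) (S.lie_neg_eq_zero t t' hc) r ⁅e', x⁆
    rw [hz, lie_zero, hcx, map_smul, smul_eq_zero] at h1
    exact hr.1 (h1.resolve_left hc0)
  have w1 := (S.weight t hδ hx h0 hq hr).1
  have w2 := (S.weight t hδβ hmem hne hq' hr').1
  rw [LinearMap.add_apply, w1, hw] at w2
  refine intCast_inj_of_abs_lt (k := k) p ?_ (by push_cast; exact w2.symm)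
  rw [abs_lt]
  constructor <;> omega

theorem chain_three (t : IsTriple H α e f h) (t' : IsTriple H β e' f' h') {N w : ℕ}
    (hE : LieAlgebra.ad k M e ^ (N + 1) = 0) (hc : ⁅e, e'⁆ = 0) (hw : β h = (w : k))
    (hwp : w < p) (hNp : 2 * N < w + p) (hx : x ∈ rootSp k M H δ)
    (hne : (LieAlgebra.ad k M e' ^ 3) x ≠ 0) :
    IsRoot H δ ∧ IsRoot H (δ + β) ∧ IsRoot H (δ + β + β) ∧ IsRoot H (δ + β + β + β) ∧
      ∃ W : ℤ, δ h = W ∧ -N ≤ W ∧ W + 3 * w ≤ N := by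
  have hβ := S.isRoot_of_triple t'
  have hF := S.ad_neg_pow_eq_zero t hE
  have h3 : ⁅e', ⁅e', ⁅e', x⁆⁆⁆ ≠ 0 := by
    simpa [pow_succ, Module.End.mul_apply] using hne
  have h2 : ⁅e', ⁅e', x⁆⁆ ≠ 0 := fun hz => h3 (by rw [hz, lie_zero])
  have h1 : ⁅e', x⁆ ≠ 0 := fun hz => h2 (by rw [hz, lie_zero])
  have h0 : x ≠ 0 := by rintro rfl; simp at h1
  have m1 := lie_mem_rootSp t'.mem_pos hx
  have m2 := lie_mem_rootSp t'.mem_pos m1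
  have m3 := lie_mem_rootSp t'.mem_pos m2
  have r0 : IsRoot H δ := by
    refine isRoot_of_mem ?_ hx h0
    rintro rfl
    exact h2 (S.lie_lie_eq_zero_of_mem_zero t'.mem_pos hx)
  have r1 : IsRoot H (δ + β) := by
    refine isRoot_of_mem ?_ m1 h1
    intro hz
    rw [hz] at m1
    exact h3 (S.lie_lie_eq_zero_of_mem_zero t'.mem_pos m1)
  have r2 : IsRoot H (δ + β + β) := by
    refine isRoot_of_mem ?_ m2 h2
    intro hz
    refine S.not_isRoot_two_smul (S.neg hβ) ?_
    convert r0 using 1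
    rw [add_assoc, add_eq_zero_iff_eq_neg] at hz
    rw [hz]
    module
  have r3 : IsRoot H (δ + β + β + β) := by
    refine isRoot_of_mem ?_ m3 h3
    intro hz
    refine S.not_isRoot_two_smul (S.neg hβ) ?_
    convert r1 using 1
    rw [add_assoc, add_eq_zero_iff_eq_neg] at hz
    rw [hz]
    module
  refine ⟨r0, r1, r2, r3, ?_⟩
  obtain ⟨q0, hq0⟩ := S.exists_depth_pos t h0
  obtain ⟨s0, hs0⟩ := S.exists_depth_neg t h0
  obtain ⟨q1, hq1⟩ := S.exists_depth_pos t h1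
  obtain ⟨s1, hs1⟩ := S.exists_depth_neg t h1
  obtain ⟨q2, hq2⟩ := S.exists_depth_pos t h2
  obtain ⟨s2, hs2⟩ := S.exists_depth_neg t h2
  obtain ⟨q3, hq3⟩ := S.exists_depth_pos t h3
  obtain ⟨s3, hs3⟩ := S.exists_depth_neg t h3
  have c1 := S.chain_step t t' hE hc hw hwp hNp r0 r1 hx h1 hq0 hs0 hq1 hs1
  have c2 := S.chain_step t t' hE hc hw hwp hNp r1 r2 m1 h2 hq1 hs1 hq2 hs2
  have c3 := S.chain_step t t' hE hc hw hwp hNp r2 r3 m2 h3 hq2 hs2 hq3 hs3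
  have hqN : q0 ≤ N := hq0.le_of_eq_zero (by rw [hE, LinearMap.zero_apply])
  have hsN : s3 ≤ N := hs3.le_of_eq_zero (by rw [hF, LinearMap.zero_apply])
  refine ⟨s0 - q0, ?_, by omega, by omega⟩
  rw [(S.weight t r0 hx h0 hq0 hs0).1]
  push_cast
  rfl

theorem exists_ad_pow_three_eq_zero (hα : IsRoot H α) :
    ∃ β e, IsRoot H β ∧ e ∈ rootSp k M H β ∧ e ≠ 0 ∧ LieAlgebra.ad k M e ^ 3 = 0 := by
  obtain ⟨e, f, h, t⟩ := S.exists_triple hα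
  obtain ⟨hh0, he0, hf0⟩ := S.triple_ne_zero t
  have hp5 := S.five_le hα
  have hex : ∃ n, LieAlgebra.ad k M e ^ n = 0 := ⟨p - 1, S.ad_pow_eq_zero hα t.mem_pos⟩
  classical
  have he2f : (LieAlgebra.ad k M e ^ 2) f ≠ 0 := by
    rw [pow_two, Module.End.mul_apply, LieAlgebra.ad_apply, LieAlgebra.ad_apply, t.lie_eq,
      ← lie_skew, t.lie_e]
    exact neg_ne_zero.mpr (smul_ne_zero S.two_ne_zero he0)
  have h3 : 3 ≤ Nat.find hex := by
    by_contra! hlt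
    refine he2f (pow_apply_eq_zero_of_le (i := Nat.find hex) (by omega) ?_)
    rw [Nat.find_spec hex, LinearMap.zero_apply]
  obtain ⟨N, hN⟩ : ∃ N, Nat.find hex = N + 1 := ⟨Nat.find hex - 1, by omega⟩
  have hE : LieAlgebra.ad k M e ^ (N + 1) = 0 := hN ▸ Nat.find_spec hex
  have hNp : N + 1 ≤ p - 1 := hN ▸ Nat.find_min' hex (S.ad_pow_eq_zero hα t.mem_pos)
  have hNne : LieAlgebra.ad k M e ^ N ≠ 0 := Nat.find_min hex (by omega)
  obtain ⟨δ, x, hx, hne⟩ : ∃ δ, ∃ x ∈ rootSp k M H δ, (LieAlgebra.ad k M e ^ N) x ≠ 0 := by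
    by_contra! hall
    exact hNne (S.end_eq_zero hall)
  have h0 : x ≠ 0 := by rintro rfl; simp at hne
  have hδ : IsRoot H δ := by
    refine isRoot_of_mem ?_ hx h0
    rintro rfl
    refine hne (pow_apply_eq_zero_of_le (i := 2) (by omega) ?_)
    rw [pow_two]
    exact S.lie_lie_eq_zero_of_mem_zero t.mem_pos hx
  have hq : IsDepth (LieAlgebra.ad k M e) x N := ⟨hne, by rw [hE, LinearMap.zero_apply]⟩
  obtain ⟨r, hr⟩ := S.exists_depth_neg t h0
  obtain ⟨hβ, hd0, hdr, hw⟩ := S.top t hδ hx h0 hq hr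
  have hrN := hdr.le_of_eq_zero (i := N) (by
    rw [S.ad_neg_pow_eq_zero t hE, LinearMap.zero_apply])
  obtain rfl : r = 0 := by omega
  have hy := ad_pow_mem_rootSp t.mem_pos hx N
  obtain ⟨e', f', h', t'⟩ := S.exists_triple hβ
  have he' := (S.triple_ne_zero t').2.1
  refine ⟨_, e', hβ, t'.mem_pos, he', ?_⟩
  have hcomm : ⁅e, e'⁆ = 0 := by
    obtain ⟨c, hc⟩ := S.eq_smul hβ hy hne t'.mem_pos
    have hkill : ⁅e, (LieAlgebra.ad k M e ^ N) x⁆ = 0 := (isDepth_zero_iff.mp hd0).2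
    rw [hc, lie_smul, hkill, smul_zero]
  refine S.end_eq_zero fun ε z hz => ?_
  by_contra hz3
  obtain ⟨-, -, -, -, W, -, hW1, hW2⟩ := S.chain_three t t' hE hcomm (w := N)
    (by simpa using hw) (by omega) (by omega) hz hz3
  omega

end IsSplitCartan
end Chains
end ElemAb
namespace ElemAb

section CubeZero

variable {k M : Type} [Field k] [LieRing M] [LieAlgebra k M]
variable {H : LieSubalgebra k M} {α β δ : Module.Dual k ↥H} {x y e f e' f' : M} {h h' : ↥H}

theorem linearIndependent_of_ne (hx : x ∈ rootSp k M H α) (hx0 : x ≠ 0)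
    (hy : y ∈ rootSp k M H β) (hy0 : y ≠ 0) (hne : α ≠ β) : LinearIndependent k ![x, y] := by
  rw [LinearIndependent.pair_iff' hx0]
  rintro a rfl
  refine hne (LinearMap.ext fun h => ?_)
  have h1 := hy h
  rw [lie_smul, hx h, smul_comm, ← sub_eq_zero, ← sub_smul, smul_eq_zero] at h1
  exact sub_eq_zero.mp (h1.resolve_right hy0)

namespace IsSplitCartan

variable {p : ℕ} [hpf : Fact p.Prime] [CharP k p] (S : IsSplitCartan p H)
include S

theorem exists_small_depths (t : IsTriple H α e f h) (hE : LieAlgebra.ad k M e ^ 3 = 0)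
    (hδ : IsRoot H δ) (hx : x ∈ rootSp k M H δ) (h0 : x ≠ 0) :
    ∃ q r : ℕ, IsDepth (LieAlgebra.ad k M e) x q ∧ IsDepth (LieAlgebra.ad k M f) x r ∧
      r + q ≤ 2 ∧ δ h = ((r - q : ℤ) : k) := by
  obtain ⟨q, hq⟩ := S.exists_depth_pos t h0
  obtain ⟨r, hr⟩ := S.exists_depth_neg t h0
  refine ⟨q, r, hq, hr, ?_, ?_⟩
  · refine (S.top t hδ hx h0 hq hr).2.2.1.le_of_eq_zero ?_
    rw [S.ad_neg_pow_eq_zero t (N := 2) hE, LinearMap.zero_apply]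
  · rw [(S.weight t hδ hx h0 hq hr).1]
    push_cast
    rfl

theorem lie_eq_zero_of_weight_pos (t : IsTriple H α e f h) (hE : LieAlgebra.ad k M e ^ 3 = 0)
    (hδ : IsRoot H δ) (hx : x ∈ rootSp k M H δ) {w : ℕ} (hw1 : 1 ≤ w) (hw2 : w ≤ 2)
    (hw : δ h = (w : k)) : ⁅e, x⁆ = 0 := by
  by_cases h0 : x = 0
  · rw [h0, lie_zero]
  have hp5 := S.five_le hδ
  obtain ⟨q, r, hq, hr, hqr, hval⟩ := S.exists_small_depths t hE hδ hx h0
  have heq : (r - q : ℤ) = w := by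
    refine intCast_inj_of_abs_lt (k := k) p ?_ (by rw [← hval, hw]; simp)
    rw [abs_lt]
    constructor <;> omega
  obtain rfl : q = 0 := by omega
  exact (isDepth_zero_iff.mp hq).2

theorem ad_pow_three_of_weight_two (t : IsTriple H α e f h)
    (hE : LieAlgebra.ad k M e ^ 3 = 0) (t' : IsTriple H β e' f' h') (hw : β h = 2) :
    LieAlgebra.ad k M e' ^ 3 = 0 := by
  have hβ := S.isRoot_of_triple t'
  have hp5 := S.five_le hβ
  have hc := S.lie_eq_zero_of_weight_pos t hE hβ t'.mem_pos (w := 2) (by omega) le_rfl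
    (by exact_mod_cast hw)
  refine S.end_eq_zero fun ε z hz => ?_
  by_contra hz3
  obtain ⟨-, -, -, -, W, -, hW1, hW2⟩ := S.chain_three t t' (N := 2) hE hc (w := 2)
    (by exact_mod_cast hw) (by omega) (by omega) hz hz3
  omega

theorem isRoot_of_weight_one (t : IsTriple H α e f h)
    (hE : LieAlgebra.ad k M e ^ 3 = 0) (h2 : ∀ ε, IsRoot H ε → ε h = 2 → ε = α)
    (t' : IsTriple H β e' f' h') (hw : β h = 1) (hne : LieAlgebra.ad k M e' ^ 3 ≠ 0) :
    IsRoot H (2 • β - α) ∧ IsRoot H (3 • β - α) := by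
  have hβ := S.isRoot_of_triple t'
  have hp5 := S.five_le hβ
  have hc := S.lie_eq_zero_of_weight_pos t hE hβ t'.mem_pos (w := 1) le_rfl (by omega)
    (by exact_mod_cast hw)
  obtain ⟨δ, x, hx, hx3⟩ : ∃ δ, ∃ x ∈ rootSp k M H δ, (LieAlgebra.ad k M e' ^ 3) x ≠ 0 := by
    by_contra! hall
    exact hne (S.end_eq_zero hall)
  obtain ⟨r0, r1, r2, r3, W, hW, hW1, hW2⟩ := S.chain_three t t' (N := 2) hE hc (w := 1)
    (by exact_mod_cast hw) (by omega) (by omega) hx hx3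
  obtain rfl | rfl : W = -2 ∨ W = -1 := by omega
  · have : -δ = α := h2 _ (S.neg r0) (by rw [LinearMap.neg_apply, hW]; simp)
    obtain rfl : δ = -α := by rw [← this, neg_neg]
    constructor
    · convert r2 using 1
      module
    · convert r3 using 1
      module
  · have : δ + β + β + β = α := h2 _ r3 (by
      simp only [LinearMap.add_apply, hW, hw]
      push_cast
      ring)
    obtain rfl : δ = α - 3 • β := by rw [← this]; module
    constructor
    · convert S.neg r1 using 1
      module
    · convert S.neg r0 using 1
      module

theorem exists_pair_or_commute (t : IsTriple H α e f h) (hE : LieAlgebra.ad k M e ^ 3 = 0) :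
    (∃ e', LinearIndependent k ![e, e'] ∧ ⁅e, e'⁆ = 0 ∧ LieAlgebra.ad k M e' ^ 3 = 0) ∨
      ∀ δ, IsRoot H δ → δ = α ∨ δ = -α ∨ ∀ x ∈ rootSp k M H δ, ⁅e, x⁆ = 0 ∧ ⁅f, x⁆ = 0 := by
  have he0 := (S.triple_ne_zero t).2.1
  by_cases h2 : ∀ ε, IsRoot H ε → ε h = 2 → ε = α
  swap
  · push Not at h2
    obtain ⟨β, hβ, hw, hne⟩ := h2
    obtain ⟨e', f', h', t'⟩ := S.exists_triple hβ
    exact Or.inl ⟨e', linearIndependent_of_ne t.mem_pos he0 t'.mem_pos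
      (S.triple_ne_zero t').2.1 hne.symm,
      S.lie_eq_zero_of_weight_pos t hE hβ t'.mem_pos (w := 2) (by omega) le_rfl
        (by exact_mod_cast hw), S.ad_pow_three_of_weight_two t hE t' hw⟩
  by_cases h1 : ∃ β, IsRoot H β ∧ β h = 1
  · left
    have hfin : ∀ β e' f' h', IsTriple H β e' f' h' → β h = 1 → LieAlgebra.ad k M e' ^ 3 = 0 →
        ∃ e', LinearIndependent k ![e, e'] ∧ ⁅e, e'⁆ = 0 ∧ LieAlgebra.ad k M e' ^ 3 = 0 := by
      intro β e' f' h' t' hw h3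
      refine ⟨e', linearIndependent_of_ne t.mem_pos he0 t'.mem_pos
        (S.triple_ne_zero t').2.1 ?_, S.lie_eq_zero_of_weight_pos t hE (S.isRoot_of_triple t')
        t'.mem_pos (w := 1) le_rfl (by omega) (by exact_mod_cast hw), h3⟩
      rintro rfl
      rw [t.apply_eq_two] at hw
      exact one_ne_zero (α := k) (by linear_combination hw)
    obtain ⟨β, hβ, hw⟩ := h1
    obtain ⟨e', f', h', t'⟩ := S.exists_triple hβ
    by_cases h3 : LieAlgebra.ad k M e' ^ 3 = 0
    · exact hfin β e' f' h' t' hw h3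
    obtain ⟨r2, r3⟩ := S.isRoot_of_weight_one t hE h2 t' hw h3
    obtain ⟨e'', f'', h'', t''⟩ := S.exists_triple r3
    have hw' : (3 • β - α) h = 1 := by
      simp [hw, t.apply_eq_two]
      norm_num
    refine hfin _ e'' f'' h'' t'' hw' ?_
    by_contra h3'
    obtain ⟨r2', -⟩ := S.isRoot_of_weight_one t hE h2 t'' hw' h3'
    refine S.not_isRoot_three_smul r2 ?_
    convert r2' using 1
    module
  · push Not at h1
    right
    intro δ hδ
    by_contra! hcon
    obtain ⟨hα, hnα, x, hx, hcon⟩ := hcon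
    have h0 : x ≠ 0 := by
      rintro rfl
      simp at hcon
    obtain ⟨q, r, hq, hr, hqr, hval⟩ := S.exists_small_depths t hE hδ hx h0
    have hval' : (-δ) h = ((q - r : ℤ) : k) := by
      rw [LinearMap.neg_apply, hval]
      push_cast
      ring
    rcases q with _ | _ | _ | q
    · rcases r with _ | _ | _ | r
      · exact hcon (isDepth_zero_iff.mp hq).2 (isDepth_zero_iff.mp hr).2
      · exact h1 δ hδ (by simpa using hval)
      · exact hα (h2 δ hδ (by simpa using hval))
      · omega
    · rcases r with _ | _ | r
      · exact h1 _ (S.neg hδ) (by simpa using hval')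
      · obtain ⟨hroot, -, -, hw⟩ := S.top t hδ hx h0 hq hr
        have := h2 _ hroot (by rw [hw]; norm_num)
        exact hδ.1 (by simpa using this)
      · omega
    · obtain rfl : r = 0 := by omega
      have := h2 _ (S.neg hδ) (by rw [hval']; norm_num)
      exact hnα (by rw [← this, neg_neg])
    · omega

omit hpf in
theorem exists_of_commute [LieAlgebra.IsSimple k M] (t : IsTriple H α e f h)
    (hall : ∀ δ, IsRoot H δ → δ = α ∨ δ = -α ∨ ∀ x ∈ rootSp k M H δ, ⁅e, x⁆ = 0 ∧ ⁅f, x⁆ = 0)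
    (m : M) : ∃ a b c : k, m = a • e + b • f + c • (h : M) := by
  have hα := S.isRoot_of_triple t
  obtain ⟨hh0, he0, hf0⟩ := S.triple_ne_zero t
  let I : LieIdeal k M :=
    { Submodule.span k {e, f, (h : M)} with
      lie_mem := by
        intro z m hm
        change ⁅z, m⁆ ∈ Submodule.span k {e, f, (h : M)}
        change m ∈ Submodule.span k {e, f, (h : M)} at hm
        have mem_e : e ∈ Submodule.span k {e, f, (h : M)} := Submodule.subset_span (by simp)
        have mem_f : f ∈ Submodule.span k {e, f, (h : M)} := Submodule.subset_span (by simp)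
        have mem_h : (h : M) ∈ Submodule.span k {e, f, (h : M)} :=
          Submodule.subset_span (by simp)
        suffices key : ∀ z : M, ⁅z, e⁆ ∈ Submodule.span k {e, f, (h : M)} ∧
            ⁅z, f⁆ ∈ Submodule.span k {e, f, (h : M)} ∧
            ⁅z, (h : M)⁆ ∈ Submodule.span k {e, f, (h : M)} by
          induction hm using Submodule.span_induction with
          | mem m hm =>
            rcases hm with rfl | rfl | rfl
            exacts [(key z).1, (key z).2.1, (key z).2.2]
          | zero => simp
          | add a b _ _ ha hb => rw [lie_add]; exact Submodule.add_mem _ ha hb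
          | smul c a _ ha => rw [lie_smul]; exact Submodule.smul_mem _ _ ha
        refine S.induction_rootSp (by simp) ?_ ?_
        · rintro a b ⟨a1, a2, a3⟩ ⟨b1, b2, b3⟩
          simp only [add_lie]
          exact ⟨Submodule.add_mem _ a1 b1, Submodule.add_mem _ a2 b2, Submodule.add_mem _ a3 b3⟩
        · intro ε z hz
          by_cases hz0 : z = 0
          · simp [hz0]
          have hzh : ⁅z, (h : M)⁆ = -(ε h • z) := by rw [← lie_skew, hz h]
          by_cases hε : ε = 0
          · subst hε
            have hzH := S.mem_of_mem_rootSp_zero hz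
            have h1 := t.mem_pos ⟨z, hzH⟩
            have h2 := t.mem_neg ⟨z, hzH⟩
            simp only at h1 h2
            rw [h1, h2, hzh]
            refine ⟨Submodule.smul_mem _ _ mem_e, Submodule.smul_mem _ _ mem_f, ?_⟩
            simp
          rcases hall ε (isRoot_of_mem hε hz hz0) with rfl | rfl | hcom
          · obtain ⟨c, rfl⟩ := S.eq_smul hα t.mem_pos he0 hz
            rw [hzh, smul_lie, smul_lie, lie_self, t.lie_eq]
            exact ⟨by simp, Submodule.smul_mem _ _ mem_h, Submodule.neg_mem _
              (Submodule.smul_mem _ _ (Submodule.smul_mem _ _ mem_e))⟩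
          · obtain ⟨c, rfl⟩ := S.eq_smul (S.neg hα) t.mem_neg hf0 hz
            rw [hzh, smul_lie, smul_lie, lie_self, ← lie_skew, t.lie_eq]
            exact ⟨Submodule.smul_mem _ _ (Submodule.neg_mem _ mem_h), by simp,
              Submodule.neg_mem _ (Submodule.smul_mem _ _ (Submodule.smul_mem _ _ mem_f))⟩
          · obtain ⟨h1, h2⟩ := hcom z hz
            have h3 : ⁅z, (h : M)⁆ = 0 := by
              rw [← t.lie_eq, leibniz_lie, ← lie_skew z e, h1, ← lie_skew z f, h2]
              simp
            rw [h3, ← lie_skew, h1, ← lie_skew, h2]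
            simp }
  have hI : I ≠ ⊥ := by
    intro hb
    have : e ∈ I := Submodule.subset_span (by simp)
    rw [hb, LieSubmodule.mem_bot] at this
    exact he0 this
  have htop : I = ⊤ := (LieAlgebra.IsSimple.eq_bot_or_eq_top I).resolve_left hI
  have hm : m ∈ I := by rw [htop]; exact LieSubmodule.mem_top _
  have hm' : m ∈ Submodule.span k {e, f, (h : M)} := hm
  rw [Submodule.mem_span_triple] at hm'
  obtain ⟨a, b, c, rfl⟩ := hm'
  exact ⟨a, b, c, rfl⟩

omit hpf in
theorem triple_coeff_eq_zero (t : IsTriple H α e f h) {a b c : k}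
    (hz : a • e + b • f + c • (h : M) = 0) : a = 0 ∧ b = 0 ∧ c = 0 := by
  obtain ⟨hh0, he0, hf0⟩ := S.triple_ne_zero t
  have h2 := S.two_ne_zero
  have h1 : ⁅(h : M), a • e + b • f + c • (h : M)⁆ = 0 := by rw [hz, lie_zero]
  rw [lie_add, lie_add, lie_smul, lie_smul, lie_smul, lie_self, t.lie_e, t.lie_f] at h1
  have h1' : a • e - b • f = 0 := by
    have : (2 : k) • (a • e - b • f) = 0 := by rw [← h1]; module
    exact (smul_eq_zero.mp this).resolve_left h2
  have h3 : ⁅(h : M), a • e - b • f⁆ = 0 := by rw [h1', lie_zero]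
  rw [lie_sub, lie_smul, lie_smul, t.lie_e, t.lie_f] at h3
  have h3' : a • e + b • f = 0 := by
    have : (2 : k) • (a • e + b • f) = 0 := by rw [← h3]; module
    exact (smul_eq_zero.mp this).resolve_left h2
  have ha : (2 * a) • e = 0 := by
    have : (a • e - b • f) + (a • e + b • f) = 0 := by rw [h1', h3', add_zero]
    rw [← this]
    module
  have ha0 : a = 0 :=
    (mul_eq_zero.mp ((smul_eq_zero.mp ha).resolve_right he0)).resolve_left h2
  subst ha0
  have hb0 : b = 0 := by
    rw [zero_smul, zero_add] at h3'
    exact (smul_eq_zero.mp h3').resolve_right hf0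
  subst hb0
  refine ⟨rfl, rfl, ?_⟩
  rw [zero_smul, zero_smul, zero_add, zero_add] at hz
  exact (smul_eq_zero.mp hz).resolve_right hh0

omit hpf in
theorem not_linearIndependent_of_span (t : IsTriple H α e f h)
    (hsp : ∀ m : M, ∃ a b c : k, m = a • e + b • f + c • (h : M)) (hxy : ⁅x, y⁆ = 0) :
    ¬ LinearIndependent k ![x, y] := by
  intro hli
  have h2 := S.two_ne_zero
  obtain ⟨a, b, c, rfl⟩ := hsp x
  obtain ⟨a', b', c', rfl⟩ := hsp y
  have hfe : ⁅f, e⁆ = -(h : M) := by rw [← lie_skew, t.lie_eq]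
  have heh : ⁅e, (h : M)⁆ = -((2 : k) • e) := by rw [← lie_skew, t.lie_e]
  have hfh : ⁅f, (h : M)⁆ = (2 : k) • f := by rw [← lie_skew, t.lie_f, neg_neg]
  simp only [lie_add, add_lie, lie_smul, smul_lie, lie_self, t.lie_eq, hfe, heh, hfh, t.lie_e,
    t.lie_f] at hxy
  obtain ⟨z1, z2, z3⟩ := S.triple_coeff_eq_zero t (a := 2 * (c * a' - a * c'))
    (b := 2 * (b * c' - c * b')) (c := a * b' - b * a') (by rw [← hxy]; module)
  have y1 := (mul_eq_zero.mp z1).resolve_left h2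
  have y2 := (mul_eq_zero.mp z2).resolve_left h2
  rw [LinearIndependent.pair_iff] at hli
  have ha := hli a' (-a) (by
    linear_combination (norm := module) (-z3) • f + y1 • (h : M))
  have hb := hli b' (-b) (by
    linear_combination (norm := module) z3 • e - y2 • (h : M))
  have hc := hli c' (-c) (by
    linear_combination (norm := module) (-y1) • e + y2 • f)
  have hone := hli 1 0 (by
    rw [neg_eq_zero.mp ha.2, neg_eq_zero.mp hb.2, neg_eq_zero.mp hc.2]
    simp)
  exact one_ne_zero hone.1

end IsSplitCartan

theorem IsClassicalLie.isSplitCartan {p : ℕ} (hp3 : 3 ≤ p) (hcl : IsClassicalLie k M) :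
    ∃ H : LieSubalgebra k M, IsSplitCartan p H := by
  obtain ⟨hc, -, H, h1, h2, h3, h4, h5, h6⟩ := hcl
  exact ⟨H, hp3, hc, h1, h2, h3, h4, h5, h6⟩

theorem IsSplitCartan.exists_isRoot {p : ℕ} (S : IsSplitCartan p H)
    (hM : ¬ IsLieAbelian M) : ∃ α, IsRoot H α := by
  by_contra! hno
  have hall : ∀ m : M, m ∈ rootSp k M H 0 := by
    refine S.induction_rootSp (Submodule.zero_mem _) (fun x y => Submodule.add_mem _) ?_
    intro ε z hz
    by_cases hε : ε = 0
    · rwa [hε] at hz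
    by_cases hz0 : z = 0
    · rw [hz0]
      exact Submodule.zero_mem _
    exact absurd (isRoot_of_mem hε hz hz0) (hno ε)
  refine hM ⟨fun x y => ?_⟩
  have := hall y ⟨x, S.mem_of_mem_rootSp_zero (hall x)⟩
  simpa using this

/-- A simple Lie algebra of classical type has a nonzero element `c` with `(ad c)³ = 0`, and
either a commuting pair of such elements or no commuting independent pairs at all. -/
theorem exists_cube_zero_of_isSimple {p : ℕ} [Fact p.Prime] [CharP k p] (hp3 : 3 ≤ p)
    [hs : LieAlgebra.IsSimple k M] (hcl : IsClassicalLie k M) :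
    5 ≤ p ∧ (∃ c : M, c ≠ 0 ∧ LieAlgebra.ad k M c ^ 3 = 0) ∧
      ((∃ c c' : M, LinearIndependent k ![c, c'] ∧ ⁅c, c'⁆ = 0 ∧
        LieAlgebra.ad k M c ^ 3 = 0 ∧ LieAlgebra.ad k M c' ^ 3 = 0) ∨
      ∀ x y : M, ⁅x, y⁆ = 0 → ¬ LinearIndependent k ![x, y]) := by
  obtain ⟨H, S⟩ := hcl.isSplitCartan hp3
  obtain ⟨α, hα⟩ := S.exists_isRoot hs.non_abelian
  obtain ⟨β, c, hβ, hc, hc0, hc3⟩ := S.exists_ad_pow_three_eq_zero hα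
  refine ⟨S.five_le hα, ⟨c, hc0, hc3⟩, ?_⟩
  obtain ⟨e, f, h, t⟩ := S.exists_triple hβ
  obtain ⟨s, rfl⟩ := S.eq_smul hβ hc hc0 t.mem_pos
  have he3 : LieAlgebra.ad k M (s • c) ^ 3 = 0 := by
    rw [map_smul, smul_pow, hc3, smul_zero]
  rcases S.exists_pair_or_commute t he3 with ⟨c', h1, h2, h3⟩ | hall
  · exact Or.inl ⟨_, c', h1, h2, he3, h3⟩
  · exact Or.inr fun x y hxy =>
      S.not_linearIndependent_of_span t (S.exists_of_commute t hall) hxy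

end CubeZero
end ElemAb
namespace ElemAb

section Semisimple

variable {k L : Type} [Field k] [LieRing L] [LieAlgebra k L]
variable {ι : Type} {I : ι → LieIdeal k L}

theorem lie_eq_zero_of_iSupIndep (hI : iSupIndep I) {i j : ι} (hij : i ≠ j) {x y : L}
    (hx : x ∈ I i) (hy : y ∈ I j) : ⁅x, y⁆ = 0 := by
  have hd := (hI.pairwiseDisjoint hij).le_bot
  have : ⁅x, y⁆ ∈ I i ⊓ I j := by
    rw [LieSubmodule.mem_inf]
    exact ⟨lie_mem_left k L (I i) x y hx, lie_mem_right k L (I j) x y hy⟩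
  simpa using hd this

theorem iSup_ideal_induction (hI : iSup I = ⊤) {P : L → Prop} (h_zero : P 0)
    (h_add : ∀ x y, P x → P y → P (x + y)) (h_mem : ∀ i, ∀ x ∈ I i, P x) (x : L) : P x := by
  have hx : x ∈ iSup I := by rw [hI]; exact LieSubmodule.mem_top _
  exact LieSubmodule.iSup_induction I (motive := P) hx h_mem h_zero h_add

theorem ad_pow_three_coe (hI : iSupIndep I) (htop : iSup I = ⊤) {i : ι} {c : ↥(I i)}
    (hc : LieAlgebra.ad k ↥(I i) c ^ 3 = 0) : LieAlgebra.ad k L (c : L) ^ 3 = 0 := by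
  ext m
  refine iSup_ideal_induction htop (P := fun m => (LieAlgebra.ad k L (c : L) ^ 3) m = 0)
    (map_zero _) (fun x y hx hy => by rw [map_add, hx, hy, add_zero]) (fun j m hm => ?_) m
  by_cases hij : i = j
  · subst hij
    have := congrArg Subtype.val (LinearMap.congr_fun hc ⟨m, hm⟩)
    simpa [pow_succ] using this
  · refine pow_apply_eq_zero_of_le (i := 1) (by omega) ?_
    rw [pow_one, LieAlgebra.ad_apply]
    exact lie_eq_zero_of_iSupIndep hI hij c.2 hm

theorem linearIndependent_coe_iff {i : ι} {x y : ↥(I i)} :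
    LinearIndependent k ![(x : L), (y : L)] ↔ LinearIndependent k ![x, y] := by
  simp only [LinearIndependent.pair_iff]
  refine forall₂_congr fun a b => ?_
  rw [← Subtype.coe_inj]
  simp

theorem center_eq_bot_of_components (hI : iSupIndep I) (htop : iSup I = ⊤)
    (hc : ∀ i, LieAlgebra.center k ↥(I i) = ⊥) : LieAlgebra.center k L = ⊥ := by
  rw [LieSubmodule.eq_bot_iff]
  intro x hx
  rw [LieModule.mem_maxTrivSubmodule] at hx
  have hx' : x ∈ ⨆ i, (I i).toSubmodule := by
    rw [← LieSubmodule.iSup_toSubmodule, htop]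
    trivial
  obtain ⟨f, hf, rfl⟩ := (Submodule.mem_iSup_iff_exists_finsupp _ _).mp hx'
  refine Finset.sum_eq_zero fun j _ => ?_
  have hfj : (⟨f j, hf j⟩ : ↥(I j)) ∈ LieAlgebra.center k ↥(I j) := by
    rw [LieModule.mem_maxTrivSubmodule]
    intro m
    have h1 := hx m
    change ⁅(m : L), f.sum fun _ v => v⁆ = 0 at h1
    rw [Finsupp.sum, lie_sum, Finset.sum_eq_single j] at h1
    · exact Subtype.ext (by simpa using h1)
    · intro i _ hij
      exact lie_eq_zero_of_iSupIndep hI hij.symm m.2 (hf i)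
    · intro hj
      rw [Finsupp.notMem_support_iff.mp hj, lie_zero]
  rw [hc j, LieSubmodule.mem_bot] at hfj
  simpa using congrArg Subtype.val hfj

theorem exists_pair_of_isClassicalSemisimple {p : ℕ} [Fact p.Prime] [CharP k p] (hp3 : 3 ≤ p)
    (hcl : IsClassicalSemisimple k L) :
    LieAlgebra.center k L = ⊥ ∧
      ((5 ≤ p ∧ ∃ c c' : L, LinearIndependent k ![c, c'] ∧ ⁅c, c'⁆ = 0 ∧
        LieAlgebra.ad k L c ^ 3 = 0 ∧ LieAlgebra.ad k L c' ^ 3 = 0) ∨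
      ∀ x y : L, ⁅x, y⁆ = 0 → ¬ LinearIndependent k ![x, y]) := by
  obtain ⟨ι, -, I, hcomp, hI, htop⟩ := hcl
  have hex := fun i => by
    have := (hcomp i).1
    exact exists_cube_zero_of_isSimple hp3 (hcomp i).2
  refine ⟨center_eq_bot_of_components hI htop fun i => (hcomp i).2.1, ?_⟩
  by_cases hne : ∃ i j : ι, i ≠ j
  · obtain ⟨i, j, hij⟩ := hne
    obtain ⟨hp5, ⟨c, hc0, hc⟩, -⟩ := hex i
    obtain ⟨-, ⟨c', hc0', hc'⟩, -⟩ := hex j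
    refine Or.inl ⟨hp5, c, c', ?_, lie_eq_zero_of_iSupIndep hI hij c.2 c'.2,
      ad_pow_three_coe hI htop hc, ad_pow_three_coe hI htop hc'⟩
    rw [LinearIndependent.pair_iff' (by simpa using hc0)]
    intro a ha
    have hd := (hI.pairwiseDisjoint hij).le_bot
    have : (c' : L) ∈ I i ⊓ I j := by
      rw [LieSubmodule.mem_inf]
      exact ⟨ha ▸ (I i).smul_mem a c.2, c'.2⟩
    exact hc0' (by simpa using hd this)
  push Not at hne
  by_cases hi : ∃ i : ι, True
  · obtain ⟨i, -⟩ := hi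
    have hItop : ∀ x : L, x ∈ I i := by
      refine iSup_ideal_induction htop ((I i).zero_mem) (fun x y => (I i).add_mem) ?_
      intro j x hx
      rwa [hne i j]
    obtain ⟨hp5, -, ⟨c, c', hli, hcc, hc, hc'⟩ | hno⟩ := hex i
    · exact Or.inl ⟨hp5, c, c', linearIndependent_coe_iff.mpr hli,
        by simpa using congrArg Subtype.val hcc,
        ad_pow_three_coe hI htop hc, ad_pow_three_coe hI htop hc'⟩
    · refine Or.inr fun x y hxy hli => hno ⟨x, hItop x⟩ ⟨y, hItop y⟩ ?_ ?_
      · exact Subtype.ext (by simpa using hxy)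
      · exact linearIndependent_coe_iff.mp hli
  · refine Or.inr fun x y _ hli => ?_
    have hx0 : x = 0 := by
      refine iSup_ideal_induction htop (P := fun x => x = 0) rfl ?_ ?_ x
      · rintro x y rfl rfl
        exact add_zero 0
      · intro i
        exact absurd ⟨i, trivial⟩ hi
    exact hli.ne_zero 0 (by simpa using hx0)

end Semisimple
end ElemAb
namespace ElemAb

section Curves

variable {k V W : Type} [Field k] [AddCommGroup V] [Module k V] [AddCommGroup W] [Module k W]

/-- A map from the affine line to a vector space whose coordinates are polynomial. -/
def IsPolyCurve (X : k → V) : Prop :=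
  ∀ φ : V →ₗ[k] k, ∃ P : Polynomial k, ∀ s, φ (X s) = P.eval s

namespace IsPolyCurve

theorem const (v : V) : IsPolyCurve (fun _ : k => v) :=
  fun φ => ⟨Polynomial.C (φ v), by simp⟩

theorem add {X Y : k → V} (hX : IsPolyCurve X) (hY : IsPolyCurve Y) :
    IsPolyCurve (fun s => X s + Y s) := by
  intro φ
  obtain ⟨P, hP⟩ := hX φ
  obtain ⟨Q, hQ⟩ := hY φ
  exact ⟨P + Q, fun s => by simp [hP, hQ]⟩

theorem eval_smul {X : k → V} (hX : IsPolyCurve X) (Q : Polynomial k) :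
    IsPolyCurve (fun s => Q.eval s • X s) := by
  intro φ
  obtain ⟨P, hP⟩ := hX φ
  exact ⟨Q * P, fun s => by simp [hP]⟩

theorem pow_smul (n : ℕ) (v : V) : IsPolyCurve (fun s : k => s ^ n • v) := by
  simpa using (const v).eval_smul (Polynomial.X ^ n)

theorem prodMk {X : k → V} {Y : k → W} (hX : IsPolyCurve X) (hY : IsPolyCurve Y) :
    IsPolyCurve (fun s => (X s, Y s)) := by
  intro φ
  obtain ⟨P, hP⟩ := hX (φ ∘ₗ LinearMap.inl k V W)
  obtain ⟨Q, hQ⟩ := hY (φ ∘ₗ LinearMap.inr k V W)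
  refine ⟨P + Q, fun s => ?_⟩
  rw [Polynomial.eval_add, ← hP, ← hQ, LinearMap.comp_apply, LinearMap.comp_apply, ← map_add]
  simp

theorem bilin [FiniteDimensional k V] (B : V →ₗ[k] V →ₗ[k] W) {X Y : k → V}
    (hX : IsPolyCurve X) (hY : IsPolyCurve Y) : IsPolyCurve (fun s => B (X s) (Y s)) := by
  intro φ
  let b := Module.finBasis k V
  choose P hP using fun i => hX (b.coord i)
  choose Q hQ using fun i => hY (b.coord i)
  refine ⟨∑ i, ∑ j, P i * Q j * Polynomial.C (φ (B (b i) (b j))), fun s => ?_⟩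
  change φ (B (X s) (Y s)) = _
  conv_lhs => rw [← b.sum_repr (X s), ← b.sum_repr (Y s)]
  simp only [map_sum, map_smul, LinearMap.sum_apply, LinearMap.smul_apply, smul_eq_mul,
    Polynomial.eval_finsetSum, Polynomial.eval_mul, Polynomial.eval_C, ← hP, ← hQ,
    Module.Basis.coord_apply]
  rw [Finset.sum_comm]
  refine Finset.sum_congr rfl fun i _ => ?_
  rw [Finset.mul_sum]
  refine Finset.sum_congr rfl fun j _ => ?_
  ring

theorem comp_polyFuns {X : k → V} (hX : IsPolyCurve X) {f : V → k} (hf : f ∈ polyFuns k V) :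
    ∃ P : Polynomial k, ∀ s, f (X s) = P.eval s := by
  induction hf using Algebra.adjoin_induction with
  | mem f hf =>
    obtain ⟨φ, rfl⟩ := hf
    exact hX φ
  | algebraMap c => exact ⟨Polynomial.C c, fun s => by simp⟩
  | add f g _ _ hf hg =>
    obtain ⟨P, hP⟩ := hf
    obtain ⟨Q, hQ⟩ := hg
    exact ⟨P + Q, fun s => by simp [hP, hQ]⟩
  | mul f g _ _ hf hg =>
    obtain ⟨P, hP⟩ := hf
    obtain ⟨Q, hQ⟩ := hg
    exact ⟨P * Q, fun s => by simp [hP, hQ]⟩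

theorem finite_notMem {X : k → V} (hX : IsPolyCurve X) {U : Set V} (hU : @IsOpen V (zar k V) U)
    {s₀ : k} (h₀ : X s₀ ∈ U) : {s | X s ∉ U}.Finite := by
  classical
  change TopologicalSpace.GenerateOpen _ U at hU
  induction hU with
  | basic U hU =>
    obtain ⟨f, hf, rfl⟩ := hU
    obtain ⟨P, hP⟩ := hX.comp_polyFuns hf
    have hP0 : P ≠ 0 := by
      rintro rfl
      exact h₀ (by simp [hP])
    refine (P.roots.toFinset.finite_toSet).subset fun s hs => ?_
    have : f (X s) = 0 := by simpa using hs
    simpa [hP0, hP] using this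
  | univ => simp
  | inter U U' _ _ h h' =>
    refine ((h h₀.1).union (h' h₀.2)).subset fun s hs => ?_
    by_contra hc
    simp only [Set.mem_union, Set.mem_ofPred_eq, not_or, not_not] at hc
    exact hs hc
  | sUnion A _ h =>
    obtain ⟨U, hUA, hU⟩ := h₀
    exact (h U hUA hU).subset fun s hs hsU => hs ⟨U, hUA, hsU⟩

theorem eq_zero_of_ne [Infinite k] {X : k → V} (hX : IsPolyCurve X)
    (h : ∀ s, s ≠ 0 → X s = 0) : X 0 = 0 := by
  rw [← Module.forall_dual_apply_eq_zero_iff k]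
  intro φ
  obtain ⟨P, hP⟩ := hX φ
  have : P = 0 := by
    refine Polynomial.eq_zero_of_infinite_isRoot P ?_
    refine (Set.finite_singleton (0 : k)).infinite_compl.mono fun s hs => ?_
    change P.eval s = 0
    rw [← hP, h s hs, map_zero]
  rw [hP, this, Polynomial.eval_zero]

end IsPolyCurve
end Curves

section Planes

variable {k L : Type} [Field k] [LieRing L] [LieAlgebra k L]

/-- The span of two vectors. -/
def plane (k : Type) {L : Type} [Field k] [LieRing L] [LieAlgebra k L] (x y : L) :
    Submodule k L :=
  Submodule.span k (Set.range ![x, y])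

theorem mem_plane {x y z : L} : z ∈ plane k x y ↔ ∃ a b : k, a • x + b • y = z := by
  rw [plane, Matrix.range_cons, Matrix.range_cons, Matrix.range_empty, Set.union_empty,
    Set.singleton_union, Submodule.mem_span_pair]

theorem left_mem_plane (x y : L) : x ∈ plane k x y := mem_plane.mpr ⟨1, 0, by simp⟩

theorem right_mem_plane (x y : L) : y ∈ plane k x y := mem_plane.mpr ⟨0, 1, by simp⟩

theorem finrank_plane {x y : L} (h : LinearIndependent k ![x, y]) :
    Module.finrank k (plane k x y) = 2 := by
  rw [plane, finrank_span_eq_card h, Fintype.card_fin]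

theorem plane_eq_of_mem {x y x' y' : L} (h : LinearIndependent k ![x, y])
    (h' : LinearIndependent k ![x', y']) (hx : x' ∈ plane k x y) (hy : y' ∈ plane k x y) :
    plane k x' y' = plane k x y := by
  have : FiniteDimensional k (plane k x y) :=
    FiniteDimensional.span_of_finite k (Set.finite_range _)
  refine Submodule.eq_of_le_of_finrank_eq ?_ (by rw [finrank_plane h, finrank_plane h'])
  rw [plane, Submodule.span_le]
  rintro _ ⟨i, rfl⟩
  fin_cases i
  exacts [hx, hy]

theorem linearIndependent_swap {x y : L} (h : LinearIndependent k ![x, y]) :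
    LinearIndependent k ![y, x] := by
  rw [LinearIndependent.pair_iff] at h ⊢
  intro a b hab
  exact (h b a (by rw [add_comm]; exact hab)).symm

theorem exists_linearIndependent_left {x y z : L} (h : LinearIndependent k ![x, y])
    (hz : z ∈ plane k x y) (h0 : z ≠ 0) : ∃ w ∈ plane k x y, LinearIndependent k ![z, w] := by
  by_contra! hc
  have h1 := hc x (left_mem_plane x y)
  have h2 := hc y (right_mem_plane x y)
  simp only [LinearIndependent.pair_iff' h0, not_forall, not_not] at h1 h2
  obtain ⟨a, rfl⟩ := h1
  obtain ⟨b, rfl⟩ := h2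
  rw [LinearIndependent.pair_iff] at h
  have ha : a ≠ 0 := by
    rintro rfl
    exact one_ne_zero (h 1 0 (by simp)).1
  exact ha (neg_eq_zero.mp (h b (-a) (by rw [smul_smul, smul_smul]; module)).2)

/-- The pair `x`, `y` spans a two-dimensional elementary abelian subalgebra. -/
structure Good (p : ℕ) (k : Type) {L : Type} [Field k] [LieRing L] [LieAlgebra k L] (x y : L) :
    Prop where
  li : LinearIndependent k ![x, y]
  lie : ⁅x, y⁆ = 0
  left : LieAlgebra.ad k L x ^ p = 0
  right : LieAlgebra.ad k L y ^ p = 0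

/-- The planes spanned by good pairs. -/
def goodPlanes (p : ℕ) (k L : Type) [Field k] [LieRing L] [LieAlgebra k L] :
    Set (Submodule k L) :=
  {e | ∃ x y, Good p k x y ∧ e = plane k x y}

theorem add_pow_of_commute {p : ℕ} [Fact p.Prime] [CharP k p] {A : Type} [Ring A] [Algebra k A]
    {a b : A} (h : Commute a b) : (a + b) ^ p = a ^ p + b ^ p := by
  rcases subsingleton_or_nontrivial A with hA | hA
  · exact Subsingleton.elim _ _
  · have : CharP A p := charP_of_injective_algebraMap (algebraMap k A).injective p
    exact add_pow_char_of_commute p h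

theorem commute_ad {x y : L} (h : ⁅x, y⁆ = 0) :
    Commute (LieAlgebra.ad k L x) (LieAlgebra.ad k L y) := by
  refine LinearMap.ext fun v => ?_
  simp only [Module.End.mul_apply, LieAlgebra.ad_apply]
  rw [leibniz_lie, h, zero_lie, zero_add]

variable {p : ℕ} [Fact p.Prime] [CharP k p]

theorem Good.ad_pow {x y z : L} (g : Good p k x y) (hz : z ∈ plane k x y) :
    LieAlgebra.ad k L z ^ p = 0 := by
  have hp := (Fact.out : p.Prime).ne_zero
  obtain ⟨a, b, rfl⟩ := mem_plane.mp hz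
  rw [map_add, map_smul, map_smul, add_pow_of_commute (k := k), smul_pow, smul_pow, g.left,
    g.right, smul_zero, smul_zero, add_zero]
  exact ((commute_ad g.lie).smul_left a).smul_right b

theorem Good.of_mem {x y x' y' : L} (g : Good p k x y) (h : LinearIndependent k ![x', y'])
    (hx : x' ∈ plane k x y) (hy : y' ∈ plane k x y) : Good p k x' y' := by
  refine ⟨h, ?_, g.ad_pow hx, g.ad_pow hy⟩
  obtain ⟨a, b, rfl⟩ := mem_plane.mp hx
  obtain ⟨c, d, rfl⟩ := mem_plane.mp hy
  simp only [add_lie, lie_add, smul_lie, lie_smul, lie_self, g.lie]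
  rw [← lie_skew, g.lie]
  simp

theorem Good.exists_left {x y z : L} (g : Good p k x y) (hz : z ∈ plane k x y) (h0 : z ≠ 0) :
    ∃ w, Good p k z w ∧ plane k z w = plane k x y := by
  obtain ⟨w, hw, hli⟩ := exists_linearIndependent_left g.li hz h0
  exact ⟨w, g.of_mem hli hz hw, plane_eq_of_mem g.li hli hz hw⟩

theorem Good.swap {x y : L} (g : Good p k x y) :
    Good p k y x ∧ plane k y x = plane k x y := by
  have h := linearIndependent_swap g.li
  exact ⟨g.of_mem h (right_mem_plane x y) (left_mem_plane x y),
    plane_eq_of_mem g.li h (right_mem_plane x y) (left_mem_plane x y)⟩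

/-- Two planes of `goodPlanes p k L` lie in a common preconnected set. -/
def Linked (p : ℕ) (e e' : Submodule k L) : Prop :=
  ∃ (he : e ∈ goodPlanes p k L) (he' : e' ∈ goodPlanes p k L) (A : Set ↥(goodPlanes p k L)),
    @IsPreconnected _ (planeTop (goodPlanes p k L)) A ∧ ⟨e, he⟩ ∈ A ∧ ⟨e', he'⟩ ∈ A

omit [Fact p.Prime] [CharP k p] in
theorem Linked.refl {e : Submodule k L} (he : e ∈ goodPlanes p k L) : Linked p e e := by
  let := planeTop (goodPlanes p k L)
  exact ⟨he, he, {⟨e, he⟩}, isPreconnected_singleton, rfl, rfl⟩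

omit [Fact p.Prime] [CharP k p] in
theorem Linked.trans {e e' e'' : Submodule k L} (h : Linked p e e') (h' : Linked p e' e'') :
    Linked p e e'' := by
  let := planeTop (goodPlanes p k L)
  obtain ⟨he, he', A, hA, h1, h2⟩ := h
  obtain ⟨_, he'', B, hB, h3, h4⟩ := h'
  exact ⟨he, he'', A ∪ B, hA.union _ h2 h3 hB, Or.inl h1, Or.inr h4⟩

omit [Fact p.Prime] [CharP k p] in
theorem linked_of_path [Infinite k] {X Y : k → L} (hX : IsPolyCurve X) (hY : IsPolyCurve Y)
    (hg : ∀ s, Good p k (X s) (Y s)) (s t : k) :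
    Linked p (plane k (X s) (Y s)) (plane k (X t) (Y t)) := by
  let := planeTop (goodPlanes p k L)
  have hmem : ∀ s, plane k (X s) (Y s) ∈ goodPlanes p k L := fun s => ⟨_, _, hg s, rfl⟩
  have hpair : ∀ s, (X s, Y s) ∈ planePairs (goodPlanes p k L) := fun s => ⟨(hg s).li, hmem s⟩
  refine ⟨hmem s, hmem t, Set.range fun s => ⟨_, hmem s⟩, ?_, ⟨s, rfl⟩, ⟨t, rfl⟩⟩
  have key : ∀ U : Set ↥(goodPlanes p k L), IsOpen U →
      ∀ s, (⟨_, hmem s⟩ : ↥(goodPlanes p k L)) ∈ U →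
      {s | (⟨_, hmem s⟩ : ↥(goodPlanes p k L)) ∉ U}.Finite := by
    intro U hU s hs
    obtain ⟨W, hW, hWU⟩ : ∃ W, @IsOpen (L × L) (zar k (L × L)) W ∧
      Subtype.val ⁻¹' W = planeMk (goodPlanes p k L) ⁻¹' U := hU
    have hiff : ∀ s, (X s, Y s) ∈ W ↔ (⟨_, hmem s⟩ : ↥(goodPlanes p k L)) ∈ U := by
      intro s
      have := Set.ext_iff.mp hWU ⟨_, hpair s⟩
      exact this
    simpa only [hiff] using (hX.prodMk hY).finite_notMem hW ((hiff s).mpr hs)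
  refine IsPreirreducible.isPreconnected ?_
  rintro U U' hU hU' ⟨_, ⟨s, rfl⟩, hs⟩ ⟨_, ⟨s', rfl⟩, hs'⟩
  obtain ⟨r, hr⟩ := ((key U hU s hs).union (key U' hU' s' hs')).infinite_compl.nonempty
  simp only [Set.mem_compl_iff, Set.mem_union, Set.mem_ofPred_eq, not_or, not_not] at hr
  exact ⟨_, ⟨r, rfl⟩, hr⟩

omit [Fact p.Prime] [CharP k p] in
theorem IsPolyCurve.good_zero [Infinite k] [FiniteDimensional k L] {X Y : k → L}
    (hX : IsPolyCurve X) (hY : IsPolyCurve Y) (hg : ∀ s, s ≠ 0 → Good p k (X s) (Y s))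
    (h0 : LinearIndependent k ![X 0, Y 0]) : Good p k (X 0) (Y 0) := by
  have had : ∀ {Z : k → L}, IsPolyCurve Z → (∀ s, s ≠ 0 → LieAlgebra.ad k L (Z s) ^ p = 0) →
      LieAlgebra.ad k L (Z 0) ^ p = 0 := by
    intro Z hZ h
    ext v
    have hcurve : ∀ n : ℕ, IsPolyCurve (fun s => (LieAlgebra.ad k L (Z s) ^ n) v) := by
      intro n
      induction n with
      | zero => simpa using IsPolyCurve.const v
      | succ n ih =>
        simp only [pow_succ', Module.End.mul_apply]
        exact IsPolyCurve.bilin (LieAlgebra.ad k L : L →ₗ[k] Module.End k L) hZ ih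
    refine (hcurve p).eq_zero_of_ne fun s hs => ?_
    rw [h s hs, LinearMap.zero_apply]
  refine ⟨h0, ?_, had hX fun s hs => (hg s hs).left, had hY fun s hs => (hg s hs).right⟩
  exact (IsPolyCurve.bilin (LieAlgebra.ad k L : L →ₗ[k] Module.End k L) hX hY).eq_zero_of_ne
    fun s hs => (hg s hs).lie

end Planes
end ElemAb
namespace ElemAb

section Heisenberg

open Polynomial in
theorem derivative_pow_of_commutator {R : Type} [Ring R] {a c z : R} (hz : c * a = a * c + z)
    (hza : Commute z a) (hzc : Commute z c) (n : ℕ) :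
    derivative ((C a + X * C c) ^ (n + 2)) =
      (n + 2 : ℕ) • ((C a + X * C c) ^ (n + 1) * C c) +
        (n + 2).choose 2 • ((C a + X * C c) ^ n * C z) := by
  have hB : derivative (C a + X * C c) = C c := by simp
  have hCB : C c * (C a + X * C c) = (C a + X * C c) * C c + C z := by
    rw [mul_add, add_mul, ← C_mul, hz, C_add, C_mul, ← mul_assoc (C c), ← X_mul_C]
    abel
  have hzB : C z * (C a + X * C c) = (C a + X * C c) * C z := by
    have hzc' : C z * C c = C c * C z := by rw [← C_mul, hzc.eq, C_mul]
    rw [mul_add, add_mul, ← C_mul, hza.eq, C_mul, ← mul_assoc, ← X_mul_C, mul_assoc, mul_assoc,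
      hzc']
  generalize C a + X * C c = B at hB hCB hzB ⊢
  induction n with
  | zero =>
    rw [pow_two, derivative_mul, hB, hCB]
    simp [two_smul]
    abel
  | succ n ih =>
    rw [pow_succ B (n + 1 + 1), derivative_mul, ih, hB, add_mul, smul_mul_assoc, smul_mul_assoc,
      mul_assoc, hCB, mul_assoc, hzB, mul_add, smul_add, ← mul_assoc, ← pow_succ, ← mul_assoc,
      ← pow_succ]
    have hch : (n + 1 + 2).choose 2 = (n + 2) + (n + 2).choose 2 := by
      rw [Nat.choose_succ_succ' (n + 2) 1, Nat.choose_one_right]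
    rw [hch, show n + 1 + 2 = (n + 2) + 1 by omega, show n + 1 + 1 = n + 2 by omega]
    generalize n + 2 = N
    generalize N.choose 2 = M
    simp only [add_smul, one_smul]
    abel

open Polynomial in
/-- In characteristic `p ≥ 3`, the `p`-th power is additive on a pair whose commutator is
central. -/
theorem add_pow_of_central_commutator {k R : Type} [Field k] {p : ℕ} [hpf : Fact p.Prime]
    [CharP k p] (hp3 : 3 ≤ p) [Ring R] [Algebra k R] {a c z : R} (hz : c * a = a * c + z)
    (hza : Commute z a) (hzc : Commute z c) : (a + c) ^ p = a ^ p + c ^ p := by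
  obtain ⟨n, rfl⟩ : ∃ n, p = n + 2 := ⟨p - 2, by omega⟩
  have hder := derivative_pow_of_commutator hz hza hzc n
  have hcast : ∀ (m : ℕ) (v : R[X]), n + 2 ∣ m → m • v = 0 := by
    intro m v hm
    rw [← Nat.cast_smul_eq_nsmul k, (CharP.cast_eq_zero_iff k (n + 2) m).mpr hm, zero_smul]
  rw [hcast _ _ dvd_rfl, hcast _ _ (hpf.out.dvd_choose_self (by omega) (by omega)), add_zero]
    at hder
  have hdeg : (C a + X * C c).natDegree ≤ 1 := by
    rw [add_comm, X_mul_C]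
    exact natDegree_linear_le
  have hdegp := natDegree_pow_le_of_le (n + 2) hdeg
  have h0 : ((C a + X * C c) ^ (n + 2)).coeff 0 = a ^ (n + 2) := by
    have := map_pow constantCoeff (C a + X * C c) (n + 2)
    simpa using this
  have h1 : ((C a + X * C c) ^ (n + 2)).coeff (n + 2) = c ^ (n + 2) := by
    have := coeff_pow_of_natDegree_le (m := n + 2) hdeg
    rw [mul_one] at this
    simpa [coeff_C] using this
  have hmid : ∀ i, i ≠ 0 → i < n + 2 → ((C a + X * C c) ^ (n + 2)).coeff i = 0 := by
    intro i hi0 hi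
    obtain ⟨j, rfl⟩ := Nat.exists_eq_succ_of_ne_zero hi0
    have := coeff_derivative ((C a + X * C c) ^ (n + 2)) j
    rw [hder, coeff_zero, ← Nat.cast_add_one, ← nsmul_eq_mul', ← Nat.cast_smul_eq_nsmul k] at this
    exact (smul_eq_zero.mp this.symm).resolve_left
      (natCast_ne_zero_of_lt (n + 2) (Nat.succ_pos j) hi)
  have hev := map_pow (eval₂RingHom' (RingHom.id R) 1 (fun a => Commute.one_right a))
    (C a + X * C c) (n + 2)
  have hev1 : ∀ Q : R[X], eval₂RingHom' (RingHom.id R) 1 (fun a => Commute.one_right a) Q =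
    eval 1 Q := fun Q => rfl
  rw [hev1, hev1, eval_eq_sum_range' (n := n + 3) (by omega), Finset.sum_range_succ, h1,
    Finset.sum_range_succ', h0, Finset.sum_eq_zero] at hev
  · rw [X_mul_C] at hev
    simpa using hev.symm
  · intro i hi
    rw [hmid (i + 1) (by omega) (by simpa using hi), zero_mul]

end Heisenberg
end ElemAb
namespace ElemAb

section Exponential

variable {k L : Type} [Field k] [LieRing L] [LieAlgebra k L]

/-- The exponential of `t • ad c`, truncated after the quadratic term. -/
def quadExp (c : L) (t : k) : L →ₗ[k] L :=
  LinearMap.id + t • LieAlgebra.ad k L c +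
    t ^ 2 • (2⁻¹ : k) • (LieAlgebra.ad k L c ∘ₗ LieAlgebra.ad k L c)

theorem quadExp_apply (c : L) (t : k) (x : L) :
    quadExp c t x = x + t • ⁅c, x⁆ + t ^ 2 • (2⁻¹ : k) • ⁅c, ⁅c, x⁆⁆ := rfl

theorem quadExp_zero (c x : L) : quadExp c (0 : k) x = x := by
  simp [quadExp_apply]

theorem isPolyCurve_quadExp (c x : L) : IsPolyCurve (fun t : k => quadExp c t x) := by
  have := ((IsPolyCurve.const (k := k) x).add (IsPolyCurve.pow_smul 1 ⁅c, x⁆)).add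
    (IsPolyCurve.pow_smul 2 ((2⁻¹ : k) • ⁅c, ⁅c, x⁆⁆))
  simpa only [quadExp_apply, pow_one] using this

variable {c : L} (hc : ∀ x : L, ⁅c, ⁅c, ⁅c, x⁆⁆⁆ = 0) (h2 : (2 : k) ≠ 0) (h3 : (3 : k) ≠ 0)
include hc h2

theorem quadExp_neg_apply (t : k) (x : L) : quadExp c t (quadExp c (-t) x) = x := by
  simp only [quadExp_apply, lie_add, lie_smul, hc, smul_zero, add_zero]
  match_scalars <;> field_simp <;> ring

theorem quadExp_injective (t : k) : Function.Injective (quadExp c t) := by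
  intro x y h
  have := quadExp_neg_apply hc h2 (-t) x
  rw [neg_neg, h] at this
  rw [← this]
  have := quadExp_neg_apply hc h2 (-t) y
  rwa [neg_neg] at this

include h3

theorem quadExp_lie (t : k) (x y : L) : quadExp c t ⁅x, y⁆ = ⁅quadExp c t x, quadExp c t y⁆ := by
  have hD : ∀ a b : L, ⁅c, ⁅a, b⁆⁆ = ⁅⁅c, a⁆, b⁆ + ⁅a, ⁅c, b⁆⁆ := fun a b => leibniz_lie c a b
  rw [quadExp_apply, quadExp_apply, quadExp_apply]
  have hx := hc x
  have hy := hc y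
  have hxy := hc ⁅x, y⁆
  generalize hx1 : ⁅c, x⁆ = x1 at *
  generalize hx2 : ⁅c, x1⁆ = x2 at *
  generalize hy1 : ⁅c, y⁆ = y1 at *
  generalize hy2 : ⁅c, y1⁆ = y2 at *
  simp only [hD, lie_add, hx1, hx2, hx, hy1, hy2, hy, zero_lie, lie_zero] at hxy
  have e3 : ⁅x2, y1⁆ + ⁅x1, y2⁆ = 0 := by
    refine (smul_eq_zero.mp (?_ : (3 : k) • (_ : L) = 0)).resolve_left h3
    rw [← hxy]
    module
  have e4 : ⁅x2, y2⁆ = 0 := by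
    have h := congrArg (fun z => ⁅c, z⁆) e3
    simp only [hD, lie_add, hx2, hx, hy2, hy, zero_lie, lie_zero] at h
    refine (smul_eq_zero.mp (?_ : (2 : k) • (_ : L) = 0)).resolve_left h2
    rw [← h]
    module
  have e3' := eq_neg_of_add_eq_zero_left e3
  simp only [hD, lie_add, add_lie, lie_smul, smul_lie, hx1, hx2, hy1, hy2, e4, e3', smul_zero]
  match_scalars <;> field_simp <;> ring

theorem ad_quadExp_pow (t : k) (x v : L) (n : ℕ) :
    (LieAlgebra.ad k L (quadExp c t x) ^ n) (quadExp c t v) =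
      quadExp c t ((LieAlgebra.ad k L x ^ n) v) := by
  induction n with
  | zero => rfl
  | succ n ih =>
    rw [pow_succ', pow_succ', Module.End.mul_apply, Module.End.mul_apply, ih, LieAlgebra.ad_apply,
      LieAlgebra.ad_apply, quadExp_lie hc h2 h3]

theorem ad_quadExp_pow_eq_zero (t : k) {x : L} {n : ℕ} (h : LieAlgebra.ad k L x ^ n = 0) :
    LieAlgebra.ad k L (quadExp c t x) ^ n = 0 := by
  ext v
  rw [← quadExp_neg_apply hc h2 t v, ad_quadExp_pow hc h2 h3, h]
  simp

theorem Good.map_quadExp {p : ℕ} {x y : L} (g : Good p k x y) (t : k) :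
    Good p k (quadExp c t x) (quadExp c t y) := by
  refine ⟨?_, ?_, ad_quadExp_pow_eq_zero hc h2 h3 t g.left,
    ad_quadExp_pow_eq_zero hc h2 h3 t g.right⟩
  · have := g.li
    rw [LinearIndependent.pair_iff] at this ⊢
    intro a b hab
    refine this a b (quadExp_injective hc h2 t ?_)
    rw [map_add, map_smul, map_smul, hab, map_zero]
  · rw [← quadExp_lie hc h2 h3, g.lie, map_zero]

variable [Infinite k] [FiniteDimensional k L] {p : ℕ} [Fact p.Prime] [CharP k p]

/-- Limits at `0` of curves whose planes are translates of a good plane under the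
exponentials are good planes linked to the given one. -/
theorem Good.limit {x y : L} (g : Good p k x y) {X Y : k → L} (hX : IsPolyCurve X)
    (hY : IsPolyCurve Y) (hXs : ∀ s, s ≠ 0 → ∃ a : k, a ≠ 0 ∧ X s = a • quadExp c s⁻¹ x)
    (hYs : ∀ s, s ≠ 0 → ∃ b d : k, b ≠ 0 ∧
      Y s = b • quadExp c s⁻¹ y + d • quadExp c s⁻¹ x)
    (h0 : LinearIndependent k ![X 0, Y 0]) :
    Good p k (X 0) (Y 0) ∧ Linked p (plane k x y) (plane k (X 0) (Y 0)) := by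
  have key : ∀ s, s ≠ 0 → Good p k (X s) (Y s) ∧
      plane k (X s) (Y s) = plane k (quadExp c s⁻¹ x) (quadExp c s⁻¹ y) := by
    intro s hs
    have gs := g.map_quadExp hc h2 h3 s⁻¹
    obtain ⟨a, ha, hXa⟩ := hXs s hs
    obtain ⟨b, d, hb, hYb⟩ := hYs s hs
    have hXm : X s ∈ plane k (quadExp c s⁻¹ x) (quadExp c s⁻¹ y) :=
      mem_plane.mpr ⟨a, 0, by rw [hXa]; simp⟩
    have hYm : Y s ∈ plane k (quadExp c s⁻¹ x) (quadExp c s⁻¹ y) :=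
      mem_plane.mpr ⟨d, b, by rw [hYb, add_comm]⟩
    have hli : LinearIndependent k ![X s, Y s] := by
      have h := gs.li
      rw [LinearIndependent.pair_iff] at h ⊢
      intro m n hmn
      rw [hXa, hYb] at hmn
      obtain ⟨h1, h2⟩ := h (m * a + n * d) (n * b) (by rw [← hmn]; module)
      have hn : n = 0 := (mul_eq_zero.mp h2).resolve_right hb
      rw [hn, zero_mul, add_zero] at h1
      exact ⟨(mul_eq_zero.mp h1).resolve_right ha, hn⟩
    exact ⟨gs.of_mem hli hXm hYm, plane_eq_of_mem gs.li hli hXm hYm⟩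
  have g0 := hX.good_zero hY (fun s hs => (key s hs).1) h0
  have hall : ∀ s, Good p k (X s) (Y s) := by
    intro s
    by_cases hs : s = 0
    · rwa [hs]
    · exact (key s hs).1
  have l1 := linked_of_path hX hY hall 1 0
  have l2 := linked_of_path (isPolyCurve_quadExp c x) (isPolyCurve_quadExp c y)
    (fun t => g.map_quadExp hc h2 h3 t) 0 1
  rw [(key 1 one_ne_zero).2, inv_one] at l1
  rw [quadExp_zero, quadExp_zero] at l2
  exact ⟨g0, l2.trans l1⟩

omit hc h2 h3 [Infinite k] [FiniteDimensional k L] in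
theorem Good.linearIndependent_or_exists {x y : L} (g : Good p k x y) (f : L →ₗ[k] L) :
    LinearIndependent k ![f x, f y] ∨
      ∃ z w, Good p k z w ∧ plane k z w = plane k x y ∧ f z = 0 := by
  rw [or_iff_not_imp_left]
  intro h
  simp only [LinearIndependent.pair_iff, not_forall] at h
  obtain ⟨a, b, hab, hne⟩ := h
  have hz : a • x + b • y ≠ 0 := fun h0 => hne (LinearIndependent.pair_iff.mp g.li a b h0)
  obtain ⟨w, gw, hw⟩ := g.exists_left (mem_plane.mpr ⟨a, b, rfl⟩) hz
  exact ⟨_, w, gw, hw, by rw [map_add, map_smul, map_smul, hab]⟩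

omit h3 hc [Infinite k] [FiniteDimensional k L] [Fact p.Prime] [CharP k p] in
theorem smul_quadExp_inv {s : k} (hs : s ≠ 0) (x : L) :
    s ^ 2 • quadExp c s⁻¹ x = s ^ 2 • x + s ^ 1 • ⁅c, x⁆ + (2⁻¹ : k) • ⁅c, ⁅c, x⁆⁆ := by
  rw [quadExp_apply]
  match_scalars <;> field_simp

omit h3 hc h2 [Infinite k] [FiniteDimensional k L] [Fact p.Prime] [CharP k p] in
theorem isPolyCurve_quadratic (x y z : L) :
    IsPolyCurve (fun s : k => s ^ 2 • x + s ^ 1 • y + z) :=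
  ((IsPolyCurve.pow_smul 2 x).add (IsPolyCurve.pow_smul 1 y)).add (IsPolyCurve.const z)

omit h3 hc h2 [Infinite k] [FiniteDimensional k L] [Fact p.Prime] [CharP k p] in
theorem isPolyCurve_linear (x y : L) : IsPolyCurve (fun s : k => s ^ 1 • x + y) :=
  (IsPolyCurve.pow_smul 1 x).add (IsPolyCurve.const y)

/-- Every good plane is linked to one containing a nonzero element centralizing `c`. -/
theorem Good.exists_linked_centralizing {x y : L} (g : Good p k x y) :
    ∃ u v, Good p k u v ∧ ⁅c, u⁆ = 0 ∧ Linked p (plane k x y) (plane k u v) := by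
  rcases g.linearIndependent_or_exists
    ((2⁻¹ : k) • (LieAlgebra.ad k L c ∘ₗ LieAlgebra.ad k L c)) with h | ⟨y', x', g', hpl, hy'⟩
  · obtain ⟨g0, hl⟩ := g.limit hc h2 h3
      (isPolyCurve_quadratic x ⁅c, x⁆ ((2⁻¹ : k) • ⁅c, ⁅c, x⁆⁆))
      (isPolyCurve_quadratic y ⁅c, y⁆ ((2⁻¹ : k) • ⁅c, ⁅c, y⁆⁆))
      (fun s hs => ⟨s ^ 2, pow_ne_zero 2 hs, (smul_quadExp_inv h2 hs x).symm⟩)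
      (fun s hs => ⟨s ^ 2, 0, pow_ne_zero 2 hs, by
        rw [zero_smul, add_zero]; exact (smul_quadExp_inv h2 hs y).symm⟩)
      (by simpa using h)
    exact ⟨_, _, g0, by simp [hc], hl⟩
  obtain ⟨gx, hpl'⟩ := g'.swap
  rw [← hpl, ← hpl']
  clear g hpl hpl' x y
  generalize x' = x at *
  generalize y' = y at *
  replace hy' : ⁅c, ⁅c, y⁆⁆ = 0 := by
    have : (2⁻¹ : k) • ⁅c, ⁅c, y⁆⁆ = 0 := hy'
    exact (smul_eq_zero.mp this).resolve_left (inv_ne_zero h2)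
  by_cases hx : ⁅c, ⁅c, x⁆⁆ = 0
  · rcases gx.linearIndependent_or_exists (LieAlgebra.ad k L c) with h | ⟨z, w, gz, hz, hcz⟩
    · have hcurve : ∀ {z : L}, ⁅c, ⁅c, z⁆⁆ = 0 → ∀ s : k, s ≠ 0 →
          s ^ 1 • z + ⁅c, z⁆ = s • quadExp c s⁻¹ z := by
        intro z hz s hs
        rw [quadExp_apply, hz]
        match_scalars <;> field_simp
      obtain ⟨g0, hl⟩ := gx.limit hc h2 h3 (isPolyCurve_linear x ⁅c, x⁆)
        (isPolyCurve_linear y ⁅c, y⁆) (fun s hs => ⟨s, hs, hcurve hx s hs⟩)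
        (fun s hs => ⟨s, 0, hs, by rw [zero_smul, add_zero]; exact hcurve hy' s hs⟩)
        (by simpa using h)
      exact ⟨_, _, g0, by simp [hx], hl⟩
    · exact ⟨z, w, gz, hcz, hz ▸ Linked.refl ⟨z, w, gz, rfl⟩⟩
  have hx2 : (2⁻¹ : k) • ⁅c, ⁅c, x⁆⁆ ≠ 0 := smul_ne_zero (inv_ne_zero h2) hx
  by_cases hli : LinearIndependent k ![(2⁻¹ : k) • ⁅c, ⁅c, x⁆⁆, ⁅c, y⁆]
  · obtain ⟨g0, hl⟩ := gx.limit hc h2 h3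
      (isPolyCurve_quadratic x ⁅c, x⁆ ((2⁻¹ : k) • ⁅c, ⁅c, x⁆⁆)) (isPolyCurve_linear y ⁅c, y⁆)
      (fun s hs => ⟨s ^ 2, pow_ne_zero 2 hs, (smul_quadExp_inv h2 hs x).symm⟩)
      (fun s hs => ⟨s, 0, hs, by
        rw [zero_smul, add_zero, quadExp_apply, hy']
        match_scalars <;> field_simp⟩)
      (by simpa using hli)
    exact ⟨_, _, g0, by simp [hc], hl⟩
  rw [LinearIndependent.pair_iff' hx2] at hli
  push Not at hli
  obtain ⟨l, hl⟩ := hli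
  by_cases hli' : LinearIndependent k ![(2⁻¹ : k) • ⁅c, ⁅c, x⁆⁆, y - l • ⁅c, x⁆]
  · obtain ⟨g0, hl⟩ := gx.limit hc h2 h3
      (isPolyCurve_quadratic x ⁅c, x⁆ ((2⁻¹ : k) • ⁅c, ⁅c, x⁆⁆))
      (isPolyCurve_linear (-l • x) (y - l • ⁅c, x⁆))
      (fun s hs => ⟨s ^ 2, pow_ne_zero 2 hs, (smul_quadExp_inv h2 hs x).symm⟩)
      (fun s hs => ⟨1, -l * s, one_ne_zero, by
        rw [quadExp_apply, quadExp_apply, hy', ← hl]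
        match_scalars <;> field_simp <;> ring⟩)
      (by simpa using hli')
    exact ⟨_, _, g0, by simp [hc], hl⟩
  rw [LinearIndependent.pair_iff' hx2] at hli'
  push Not at hli'
  obtain ⟨m, hm⟩ := hli'
  have hl0 : l = 0 := by
    have h := congrArg (fun z => ⁅c, z⁆) hm
    simp only [lie_smul, lie_sub, hc, smul_zero, ← hl] at h
    have h' : l • (2⁻¹ : k) • ⁅c, ⁅c, x⁆⁆ = 0 := by
      rw [← neg_zero, h]
      match_scalars
      field_simp
      ring
    exact (smul_eq_zero.mp h').resolve_right hx2
  rw [hl0, zero_smul] at hl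
  exact ⟨y, x, g', hl.symm, gx.swap.2 ▸ Linked.refl ⟨y, x, g', rfl⟩⟩

/-- A good plane containing `u` centralizing `c` is linked to one containing `u` and
normalized by `c`. -/
theorem Good.exists_linked_normalizing {u y : L} (g : Good p k u y) (hu : ⁅c, u⁆ = 0) :
    ∃ (v : L) (l : k), Good p k u v ∧ ⁅c, v⁆ = l • u ∧ Linked p (plane k u y) (plane k u v) := by
  have hu0 : u ≠ 0 := g.li.ne_zero 0
  have hex : ∀ s : k, quadExp c s u = u := fun s => by simp [quadExp_apply, hu]
  by_cases h : LinearIndependent k ![u, (2⁻¹ : k) • ⁅c, ⁅c, y⁆⁆]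
  · obtain ⟨g0, hl⟩ := g.limit hc h2 h3 (IsPolyCurve.const u)
      (isPolyCurve_quadratic y ⁅c, y⁆ ((2⁻¹ : k) • ⁅c, ⁅c, y⁆⁆))
      (fun s hs => ⟨1, one_ne_zero, by rw [hex, one_smul]⟩)
      (fun s hs => ⟨s ^ 2, 0, pow_ne_zero 2 hs, by
        rw [zero_smul, add_zero]; exact (smul_quadExp_inv h2 hs y).symm⟩)
      (by simpa using h)
    exact ⟨_, 0, g0, by simp [hc], hl⟩
  rw [LinearIndependent.pair_iff' hu0] at h
  push Not at h
  obtain ⟨l, hl⟩ := h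
  by_cases h' : LinearIndependent k ![u, ⁅c, y⁆]
  · obtain ⟨g0, hlk⟩ := g.limit hc h2 h3 (IsPolyCurve.const u) (isPolyCurve_linear y ⁅c, y⁆)
      (fun s hs => ⟨1, one_ne_zero, by rw [hex, one_smul]⟩)
      (fun s hs => ⟨s, -(s⁻¹ * l), hs, by
        rw [hex, quadExp_apply, ← hl]
        match_scalars <;> field_simp <;> ring⟩)
      (by simpa using h')
    refine ⟨_, 2 * l, g0, ?_, hlk⟩
    rw [mul_smul, hl, smul_inv_smul₀ h2]
    simp
  rw [LinearIndependent.pair_iff' hu0] at h'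
  push Not at h'
  obtain ⟨m, hm⟩ := h'
  exact ⟨y, m, g, hm.symm, Linked.refl ⟨u, y, g, rfl⟩⟩

omit hc h2 h3 [FiniteDimensional k L] in
/-- A good plane containing `u` centralizing `c` and normalized by `c` is linked to the plane
spanned by `u` and `c`. -/
theorem Good.linked_of_normalizing (hp3 : 3 ≤ p) (hcp : LieAlgebra.ad k L c ^ p = 0) {u v : L}
    (g : Good p k u v) (hu : ⁅c, u⁆ = 0) {l : k} (hv : ⁅c, v⁆ = l • u)
    (hmem : c ∉ plane k u v) :
    Good p k u c ∧ Linked p (plane k u v) (plane k u c) := by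
  have huc : ⁅u, c⁆ = 0 := by rw [← lie_skew, hu, neg_zero]
  have hp0 := (Fact.out : p.Prime).ne_zero
  have hg : ∀ s : k, Good p k u (s ^ 1 • (v + -c) + c) := by
    intro s
    have he : s ^ 1 • (v + -c) + c = s • v + (1 - s) • c := by module
    rw [he]
    refine ⟨?_, ?_, g.left, ?_⟩
    · have hli := g.li
      rw [LinearIndependent.pair_iff] at hli ⊢
      intro a b hab
      have h1 : b * (1 - s) = 0 := by
        by_contra hne
        refine hmem (mem_plane.mpr ⟨-(b * (1 - s))⁻¹ * a, -(b * (1 - s))⁻¹ * (b * s), ?_⟩)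
        have : (b * (1 - s)) • c = -(a • u + (b * s) • v) := by
          rw [eq_neg_iff_add_eq_zero, ← hab]
          module
        rw [← inv_smul_smul₀ hne c, this]
        module
      obtain ⟨ha, hbs⟩ := hli a (b * s) (by
        rw [← hab, smul_add, smul_smul, smul_smul, h1, zero_smul, add_zero])
      refine ⟨ha, ?_⟩
      linear_combination h1 + hbs
    · rw [lie_add, lie_smul, lie_smul, g.lie, huc, smul_zero, smul_zero, add_zero]
    · rw [map_add, add_pow_of_central_commutator (k := k) hp3
        (z := ((1 - s) * s * l) • LieAlgebra.ad k L u), map_smul, map_smul, smul_pow, smul_pow,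
        g.right, hcp, smul_zero, smul_zero, add_zero]
      · ext w
        have := leibniz_lie c v w
        rw [hv, smul_lie] at this
        simp only [map_smul, Module.End.mul_apply, LinearMap.add_apply, LinearMap.smul_apply,
          LieAlgebra.ad_apply, this]
        module
      · rw [map_smul]
        exact ((commute_ad g.lie).smul_left _).smul_right _
      · rw [map_smul]
        exact ((commute_ad huc).smul_left _).smul_right _
  have hlk := linked_of_path (IsPolyCurve.const u) (isPolyCurve_linear (v + -c) c) hg 1 0
  have h0 := hg 0
  simp only [one_pow, one_smul, neg_add_cancel_right, ne_eq, one_ne_zero, not_false_eq_true,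
    zero_pow, zero_smul, zero_add] at hlk h0
  exact ⟨h0, hlk⟩

end Exponential
end ElemAb
namespace ElemAb

section Connectedness

variable {k L : Type} [Field k] [LieRing L] [LieAlgebra k L] {p : ℕ} [Fact p.Prime] [CharP k p]

theorem isPreconnected_goodPlanes [Infinite k] [FiniteDimensional k L] (hp5 : 5 ≤ p) {c c' : L}
    (hli : LinearIndependent k ![c, c']) (hcc : ⁅c, c'⁆ = 0)
    (hc : LieAlgebra.ad k L c ^ 3 = 0) (hc' : LieAlgebra.ad k L c' ^ 3 = 0) :
    @IsPreconnected _ (planeTop (goodPlanes p k L)) Set.univ := by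
  have h2 : (2 : k) ≠ 0 := by
    exact_mod_cast natCast_ne_zero_of_lt (k := k) p (n := 2) (by omega) (by omega)
  have h3 : (3 : k) ≠ 0 := by
    exact_mod_cast natCast_ne_zero_of_lt (k := k) p (n := 3) (by omega) (by omega)
  have hpow : ∀ {d : L}, LieAlgebra.ad k L d ^ 3 = 0 → LieAlgebra.ad k L d ^ p = 0 :=
    fun h => pow_eq_zero_of_le (by omega) h
  have hcube : ∀ {d : L}, LieAlgebra.ad k L d ^ 3 = 0 → ∀ x : L, ⁅d, ⁅d, ⁅d, x⁆⁆⁆ = 0 :=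
    fun h x => LinearMap.congr_fun h x
  have hcc' : ⁅c', c⁆ = 0 := by rw [← lie_skew, hcc, neg_zero]
  have key : ∀ e ∈ goodPlanes p k L, Linked p e (plane k c c') := by
    rintro _ ⟨x, y, g, rfl⟩
    obtain ⟨w, gw, hw⟩ : ∃ w, Good p k c w ∧ Linked p (plane k x y) (plane k c w) := by
      obtain ⟨u, v, gu, hu, hl⟩ := g.exists_linked_centralizing (hcube hc) h2 h3
      obtain ⟨v', l, gv, hv, hl'⟩ := gu.exists_linked_normalizing (hcube hc) h2 h3 hu
      by_cases hmem : c ∈ plane k u v'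
      · obtain ⟨w, gw, hw⟩ := gv.exists_left hmem (hli.ne_zero 0)
        exact ⟨w, gw, hw ▸ hl.trans hl'⟩
      · obtain ⟨guc, hl''⟩ := gv.linked_of_normalizing (by omega) (hpow hc) hu hv hmem
        exact ⟨u, guc.swap.1, guc.swap.2 ▸ (hl.trans hl').trans hl''⟩
    obtain ⟨v, l, gv, hv, hl⟩ := gw.exists_linked_normalizing (hcube hc') h2 h3 hcc'
    refine (hw.trans hl).trans ?_
    by_cases hmem : c' ∈ plane k c v
    · rw [plane_eq_of_mem gv.li hli (left_mem_plane c v) hmem]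
      exact Linked.refl ⟨c, v, gv, rfl⟩
    · exact (gv.linked_of_normalizing (by omega) (hpow hc') hcc' hv hmem).2
  let := planeTop (goodPlanes p k L)
  have hmem : plane k c c' ∈ goodPlanes p k L := ⟨c, c', ⟨hli, hcc, hpow hc, hpow hc'⟩, rfl⟩
  refine isPreconnected_of_forall ⟨_, hmem⟩ fun e _ => ?_
  obtain ⟨_, _, A, hA, h1, h2⟩ := key e.1 e.2
  exact ⟨A, Set.subset_univ A, h2, h1, hA⟩

theorem elemSet_eq_goodPlanes (P : pStructure p k L) (hcenter : LieAlgebra.center k L = ⊥) :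
    P.elemSet Set.univ 2 = goodPlanes p k L := by
  have hpm : ∀ x, P.pmap x = 0 ↔ LieAlgebra.ad k L x ^ p = 0 := by
    intro x
    refine ⟨fun h => ?_, fun h => ?_⟩
    · ext y
      rw [← P.ad_pmap, h, zero_lie, LinearMap.zero_apply]
    · have : P.pmap x ∈ LieAlgebra.center k L := by
        rw [LieModule.mem_maxTrivSubmodule]
        intro y
        rw [← lie_skew, P.ad_pmap, h, LinearMap.zero_apply, neg_zero]
      rwa [hcenter, LieSubmodule.mem_bot] at this
  ext e
  constructor
  · rintro ⟨-, hrank, habel, hnull⟩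
    have : Module.Finite k e := Module.finite_of_finrank_pos (by omega)
    let b := Module.finBasisOfFinrankEq k e hrank
    have hli : LinearIndependent k ![(b 0 : L), (b 1 : L)] := by
      have h := b.linearIndependent.map' e.subtype e.ker_subtype
      have he : ![(b 0 : L), (b 1 : L)] = e.subtype ∘ b := by
        ext i
        fin_cases i <;> rfl
      rw [he]
      exact h
    refine ⟨b 0, b 1, ⟨hli, habel _ (b 0).2 _ (b 1).2, (hpm _).mp (hnull _ (b 0).2),
      (hpm _).mp (hnull _ (b 1).2)⟩, ?_⟩
    refine (Submodule.eq_of_le_of_finrank_eq ?_ (by rw [finrank_plane hli, hrank])).symm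
    rw [plane, Submodule.span_le]
    rintro _ ⟨i, rfl⟩
    fin_cases i
    exacts [(b 0).2, (b 1).2]
  · rintro ⟨x, y, g, rfl⟩
    refine ⟨Set.subset_univ _, finrank_plane g.li, ?_, fun z hz => (hpm z).mpr (g.ad_pow hz)⟩
    intro z hz w hw
    obtain ⟨a, b, rfl⟩ := mem_plane.mp hz
    obtain ⟨c, d, rfl⟩ := mem_plane.mp hw
    have hyx : ⁅y, x⁆ = 0 := by rw [← lie_skew, g.lie, neg_zero]
    simp [g.lie, hyx]

end Connectedness
end ElemAb

open ElemAb

/-- If `g` is a classical semisimple restricted Lie algebra, then the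
variety `E(2,g)` is connected. -/
theorem statement4
    (p : ℕ) (hp : p.Prime) (hp3 : 3 ≤ p)
    (k : Type) [Field k] [IsAlgClosed k] [CharP k p]
    (L : Type) [LieRing L] [LieAlgebra k L] [FiniteDimensional k L]
    (P : pStructure p k L)
    (hcl : IsClassicalSemisimple k L) :
    P.EIsConnected Set.univ := by
  have : Fact p.Prime := ⟨hp⟩
  have : Infinite k := IsAlgClosed.instInfinite
  obtain ⟨hcenter, hpair⟩ := exists_pair_of_isClassicalSemisimple hp3 hcl
  rw [pStructure.EIsConnected, elemSet_eq_goodPlanes P hcenter]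
  rcases hpair with ⟨hp5, c, c', hli, hcc, hc, hc'⟩ | hempty
  · exact isPreconnected_goodPlanes hp5 hli hcc hc hc'
  · have : IsEmpty ↥(goodPlanes p k L) :=
      ⟨fun ⟨_, x, y, g, _⟩ => hempty x y g.lie g.li⟩
    rw [Set.univ_eq_empty_iff.mpr this]
    exact @isPreconnected_empty _ (planeTop _)
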